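/- arXiv:math/0608655 — 2 statements merged into one kernel-verified Lean document; each statement's English description precedes it below -/
import Mathlib

section
/- Let F be a field of characteristic zero, A a commutative F-algebra, n a natural number, (V, π) a universal n-dimensional representation of A, and let GL_n(F) act on V by F-algebra automorphisms via the universal property applied to conjugation of π. Then the invariant subalgebra V^{GL_n(F)} is generated as an F-algebra by the traces tr(π(a)) of the matrices π(a), as a ranges over A. -/
/-!
An element fixed by the rational points of `GL_n` is already a polynomial in the traces, and over
`ℚ` the argument needs no representation theory of `GL_n` beyond Schur–Weyl duality. Every element
of `V` is of the form `∑ q, tr (X_q D_q)`, where the `X_q` are matrices over `ℚ` and `D_q` is an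
`F`-multiple of a Kronecker product `⨂ s, π (a_s)`. The map `X ↦ ∑ q, tr (X_q D_q)` intertwines the
conjugation of `X` by tensor powers of `g` with the action of `g` on `V`. These conjugations are
closed under adjoints for the Frobenius form `tr (Xᵀ Y)`, which is anisotropic over an ordered
field, so the orthogonal complement of the kernel is stable and every invariant lifts to a tuple `X`
commuting with all tensor powers `g ⊗ ⋯ ⊗ g`. By Schur–Weyl duality each `X_q` is then a
combination of permutations of the tensor factors, and contracting `⨂ s, π (a_s)` along a
permutation gives the product over its cycles of the traces of the products of the `π (a_s)` along
the cycle.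
-/

open scoped TensorProduct
open PiTensorProduct

universe u v w

namespace SymmetricProduct

variable (F : Type u) [Field F] [CharZero F] (A : Type v) [CommRing A] [Algebra F A] (n : ℕ)

/-- `(V, π)` is a universal `n`-dimensional representation of `A` over `F`:
for every commutative `F`-algebra `B`, composing with `π` and applying `ρ` entrywise
is a bijection `AlgHom_F(V, B) ≃ AlgHom_F(A, Mat_n(B))`. -/
def IsUniversalRep {V : Type w} [CommRing V] [Algebra F V]
    (π : A →ₐ[F] Matrix (Fin n) (Fin n) V) : Prop :=
  ∀ (B : Type w) [CommRing B] [Algebra F B],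
    Function.Bijective (fun ρ : V →ₐ[F] B => (AlgHom.mapMatrix ρ).comp π)

/-- The subalgebra of elements fixed by a family of algebra endomorphisms. -/
def fixedSubalgebra {V : Type w} [CommRing V] [Algebra F V] {G : Type*}
    (σ : G → (V →ₐ[F] V)) : Subalgebra F V where
  carrier := {v | ∀ g : G, σ g v = v}
  mul_mem' := fun hx hy g => by rw [_root_.map_mul, hx g, hy g]
  add_mem' := fun hx hy g => by rw [_root_.map_add, hx g, hy g]
  one_mem' := fun g => map_one _
  algebraMap_mem' := fun r g => AlgHom.commutes _ r

/-- `σ` is the action of `GL_n(F)` on `V` obtained, via the universal property, from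
conjugation of the universal representation `π`. -/
def IsConjAction {V : Type w} [CommRing V] [Algebra F V]
    (π : A →ₐ[F] Matrix (Fin n) (Fin n) V)
    (σ : GL (Fin n) F → (V →ₐ[F] V)) : Prop :=
  ∀ (g : GL (Fin n) F) (a : A),
    (AlgHom.mapMatrix (σ g)) (π a) =
      ((g : Matrix (Fin n) (Fin n) F).map (algebraMap F V)) * π a *
        (((g⁻¹ : GL (Fin n) F) : Matrix (Fin n) (Fin n) F).map (algebraMap F V))

open scoped Matrix

section PermTrace

variable {ι κ m R : Type*} [Fintype ι] [Fintype κ] [Fintype m] [CommSemiring R]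

/-- The complete contraction of the tensor `⨂ s, M s` along `τ`: each output index is joined to the
input index that `τ` prescribes. It is the product over the cycles of `τ` of the traces of the
products of the `M s` along the cycle. -/
def permTrace [DecidableEq ι] (τ : Equiv.Perm ι) (M : ι → Matrix m m R) : R :=
  ∑ I : ι → m, ∏ s, M s (I (τ s)) (I s)

theorem permTrace_permCongr_symm [DecidableEq ι] [DecidableEq κ] (f : ι ≃ κ) (τ : Equiv.Perm κ)
    (M : κ → Matrix m m R) :
    permTrace (f.symm.permCongr τ) (M ∘ f) = permTrace τ M := by
  rw [permTrace, permTrace, ← (f.arrowCongr (Equiv.refl m)).sum_comp]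
  refine Finset.sum_congr rfl fun I _ => ?_
  rw [← f.prod_comp]
  simp

variable [DecidableEq ι]

theorem permTrace_optionCongr (e : Equiv.Perm ι) (M : Option ι → Matrix m m R) :
    permTrace e.optionCongr M = (M none).trace * permTrace e (M ∘ some) := by
  simp only [permTrace, ← (Equiv.piOptionEquivProd (β := fun _ => m)).symm.sum_comp,
    Fintype.sum_prod_type, Fintype.prod_option, Matrix.trace, Finset.sum_mul_sum]
  rfl

/-- Composing with a transposition inserts `none` into the cycle of `t`. -/
theorem permTrace_swap_mul_optionCongr (e : Equiv.Perm ι) (t : ι) (M : Option ι → Matrix m m R) :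
    permTrace (Equiv.swap none (some (e t)) * e.optionCongr) M =
      permTrace e (Function.update (M ∘ some) t (M none * M (some t))) := by
  have swap_apply (s : ι) (hs : s ≠ t) :
      Equiv.swap none (some (e t)) (some (e s)) = some (e s) :=
    Equiv.swap_apply_of_ne_of_ne (Option.some_ne_none _) (by simpa using hs)
  simp only [permTrace, ← (Equiv.piOptionEquivProd (β := fun _ => m)).symm.sum_comp,
    Fintype.sum_prod_type_right, Fintype.prod_option]
  refine Finset.sum_congr rfl fun I _ => ?_
  simp only [← Finset.mul_prod_erase _ _ (Finset.mem_univ t), Function.update_self,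
    Matrix.mul_apply, Finset.sum_mul, mul_assoc]
  refine Finset.sum_congr rfl fun i _ => ?_
  simp only [Equiv.Perm.mul_apply, Equiv.optionCongr_apply, Option.map_none, Option.map_some,
    Equiv.swap_apply_left, Equiv.swap_apply_right]
  congr 2
  refine Finset.prod_congr rfl fun s hs => ?_
  have hst := Finset.ne_of_mem_erase hs
  rw [swap_apply s hst, Function.update_of_ne hst]
  rfl

theorem permTrace_mem {U : Subsemigroup (Matrix m m R)} {S : Submonoid R}
    (hU : ∀ M ∈ U, M.trace ∈ S) (τ : Equiv.Perm ι) {M : ι → Matrix m m R} (hM : ∀ s, M s ∈ U) :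
    permTrace τ M ∈ S := by
  refine Finite.induction_empty_option (P := fun ι => ∀ [Fintype ι] [DecidableEq ι]
    (τ : Equiv.Perm ι) (M : ι → Matrix m m R), (∀ s, M s ∈ U) → permTrace τ M ∈ S)
    ?of_equiv ?empty ?option ι τ M hM
  case of_equiv =>
    intro α β f ih _ _ τ M hM
    classical
    let := Fintype.ofEquiv β f.symm
    rw [← permTrace_permCongr_symm f]
    exact ih _ _ fun s => hM (f s)
  case empty => simp [permTrace]
  case option =>
    intro α _ ih _ _ τ M hM
    classical
    obtain rfl : ‹DecidableEq (Option α)› = Option.instDecidableEq := Subsingleton.elim _ _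
    obtain rfl : ‹Fintype (Option α)› = instFintypeOption := Subsingleton.elim _ _
    obtain ⟨⟨y, e⟩, rfl⟩ := Equiv.Perm.decomposeOption.symm.surjective τ
    rw [Equiv.Perm.decomposeOption_symm_apply]
    obtain _ | y := y
    · rw [Equiv.swap_self]
      exact permTrace_optionCongr e M ▸
        S.mul_mem (hU _ (hM none)) (ih e (M ∘ some) fun s => hM _)
    · obtain ⟨t, rfl⟩ := e.surjective y
      rw [permTrace_swap_mul_optionCongr]
      refine ih e _ fun s => ?_
      obtain rfl | hs := eq_or_ne s t
      · simpa using U.mul_mem (hM _) (hM _)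
      · simpa [hs] using hM _

end PermTrace

section PiKronecker

/-- The Kronecker product `⨂ s, M s` of a finite family of matrices, with rows and columns indexed
by multi-indices; its entries are the monomials in the entries of the `M s`. -/
def piKronecker {ι m R : Type*} [Fintype ι] [CommMonoid R] (M : ι → Matrix m m R) :
    Matrix (ι → m) (ι → m) R :=
  Matrix.of fun I J => ∏ s, M s (I s) (J s)

theorem piKronecker_map {ι m R S : Type*} [Fintype ι] [CommMonoid R] [CommMonoid S] (f : R →* S)
    (M : ι → Matrix m m R) : (piKronecker M).map f = piKronecker fun s => (M s).map f := by
  ext I J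
  simp [piKronecker]

variable {ι m R : Type*} [Fintype ι] [CommSemiring R]

theorem piKronecker_one [DecidableEq m] : piKronecker (1 : ι → Matrix m m R) = 1 := by
  ext I J
  simp [piKronecker, Matrix.one_apply, Finset.prod_ite_zero, funext_iff]

variable [DecidableEq ι] [Fintype m]

theorem piKronecker_mul (M N : ι → Matrix m m R) :
    piKronecker (M * N) = piKronecker M * piKronecker N := by
  ext I J
  simp only [piKronecker, Matrix.of_apply, Pi.mul_apply, Matrix.mul_apply, Finset.prod_univ_sum,
    Fintype.piFinset_univ, Finset.prod_mul_distrib]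

variable [DecidableEq m]

theorem trace_submatrix_one_mul_piKronecker (τ : Equiv.Perm ι) (M : ι → Matrix m m R) :
    ((1 : Matrix (ι → m) (ι → m) R).submatrix (· ∘ τ) id * piKronecker M).trace =
      permTrace τ M :=
  congrArg Matrix.trace (Matrix.one_submatrix_mul _ (Equiv.refl _) _)

variable (ι)

/-- The tensor power `g ↦ g ⊗ ⋯ ⊗ g` on square matrices, which restricts to the representation of
`GL` in Schur–Weyl duality. -/
def tensorPow : Matrix m m R →* Matrix (ι → m) (ι → m) R where
  toFun g := piKronecker fun _ => g
  map_one' := piKronecker_one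
  map_mul' g h := piKronecker_mul (fun _ => g) fun _ => h

theorem tensorPow_transpose (g : Matrix m m R) : tensorPow ι gᵀ = (tensorPow ι g)ᵀ :=
  rfl

end PiKronecker

section SymmetricTensor

open MvPolynomial

variable {ι α K : Type*} [Fintype ι]

theorem exists_perm_comp_eq_of_sum_single_eq {f g : ι → α}
    (h : ∑ s, Finsupp.single (f s) 1 = ∑ s, (Finsupp.single (g s) 1 : α →₀ ℕ)) :
    ∃ σ : Equiv.Perm ι, g ∘ σ = f := by
  classical
  have card_fiber_eq (x : α) : Fintype.card {s // f s = x} = Fintype.card {s // g s = x} := by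
    simpa [Finsupp.single_apply, Fintype.card_subtype] using DFunLike.congr_fun h x
  exact ⟨Equiv.ofFiberEquiv fun x => Fintype.equivOfCardEq (card_fiber_eq x),
    funext fun s => Equiv.ofFiberEquiv_map _ s⟩

/-- The monomials of `∑ f, w f • ∏ s, X (f s)` are the orbits of multi-indices `f`, so a symmetric
`z` is constant on the indices contributing to one monomial. -/
theorem sum_mul_eq_zero_of_sum_C_mul_prod_X_eq_zero [CommSemiring K] [Fintype α] [DecidableEq ι]
    {w : (ι → α) → K} (hw : ∑ f, C (w f) * ∏ s, X (f s) = (0 : MvPolynomial α K))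
    {z : (ι → α) → K} (hz : ∀ (σ : Equiv.Perm ι) f, z (f ∘ σ) = z f) :
    ∑ f, w f * z f = 0 := by
  let orbit (f : ι → α) : α →₀ ℕ := ∑ s, Finsupp.single (f s) 1
  have z_factors : z.FactorsThrough orbit := by
    intro f g h
    obtain ⟨σ, rfl⟩ := exists_perm_comp_eq_of_sum_single_eq h
    exact hz σ g
  let L : MvPolynomial α K →ₗ[K] K :=
    (basisMonomials α K).constr K (Function.extend orbit z 0)
  have L_apply (f : ι → α) : L (C (w f) * ∏ s, X (f s)) = w f * z f := by
    have : ∏ s, X (f s) = basisMonomials α K (orbit f) := (monomial_sum_one _ _).symm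
    rw [C_mul', map_smul, this, Module.Basis.constr_basis, z_factors.extend_apply, smul_eq_mul]
  simpa [L_apply] using congrArg L hw

/-- Symmetric tensors are spanned by pure powers: a linear functional that kills `x ⊗ ⋯ ⊗ x` for
all `x` with `d x ≠ 0` is a polynomial function of `x` whose product with `d` vanishes. -/
theorem mem_span_prod_of_forall_comp_perm [Field K] [Infinite K] [Finite α]
    {d : MvPolynomial α K} (hd : d ≠ 0)
    {z : (ι → α) → K} (hz : ∀ (σ : Equiv.Perm ι) f, z (f ∘ σ) = z f) :
    z ∈ Submodule.span K ((fun x f => ∏ s, x (f s)) '' {x : α → K | eval x d ≠ 0}) := by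
  classical
  cases nonempty_fintype α
  by_contra hz_notMem
  obtain ⟨φ, hφz, hφ⟩ := Submodule.exists_le_ker_of_notMem hz_notMem
  let w (f : ι → α) : K := φ fun g => if f = g then 1 else 0
  have φ_apply (y : (ι → α) → K) : φ y = ∑ f, w f * y f := by
    simp only [φ.pi_apply_eq_sum_univ y, w, smul_eq_mul, mul_comm]
  let p : MvPolynomial α K := ∑ f, C (w f) * ∏ s, X (f s)
  have p_mul_d : p * d = 0 := by
    refine MvPolynomial.funext fun x => ?_
    rw [map_mul, map_zero, mul_eq_zero, or_iff_not_imp_right]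
    intro hx
    have : φ (fun f => ∏ s, x (f s)) = 0 := hφ (Submodule.subset_span ⟨x, hx, rfl⟩)
    simpa [p, φ_apply] using this
  have p_eq_zero := (mul_eq_zero.1 p_mul_d).resolve_right hd
  exact hφz ((φ_apply z).trans (sum_mul_eq_zero_of_sum_C_mul_prod_X_eq_zero p_eq_zero hz))

variable {m : Type*} [Fintype m] [DecidableEq m]

theorem mem_span_tensorPow_GL [DecidableEq ι] [Field K] [Infinite K]
    {Z : Matrix (ι → m) (ι → m) K}
    (hZ : ∀ σ : Equiv.Perm ι, Z.submatrix (· ∘ σ) (· ∘ σ) = Z) :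
    Z ∈ Submodule.span K (Set.range fun g : GL m K => tensorPow ι (g : Matrix m m K)) := by
  let L : ((ι → m × m) → K) →ₗ[K] Matrix (ι → m) (ι → m) K :=
    { toFun := fun z => Matrix.of fun I J => z fun s => (I s, J s)
      map_add' := fun _ _ => rfl
      map_smul' := fun _ _ => rfl }
  have Z_mem := mem_span_prod_of_forall_comp_perm (Matrix.det_mvPolynomialX_ne_zero m K)
    (z := fun f : ι → m × m => Z (Prod.fst ∘ f) (Prod.snd ∘ f)) fun σ f =>
      congrFun (congrFun (hZ σ) (Prod.fst ∘ f)) (Prod.snd ∘ f)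
  refine Submodule.span_mono ?_ (Submodule.map_span L _ ▸ Submodule.mem_map_of_mem (f := L) Z_mem)
  rintro _ ⟨_, ⟨x, hx, rfl⟩, rfl⟩
  have det_ne_zero : (Matrix.of fun i j => x (i, j)).det ≠ 0 := by
    convert hx
    rw [RingHom.map_det]
    congr 1
    ext i j
    simp
  exact ⟨Matrix.GeneralLinearGroup.mkOfDetNeZero _ det_ne_zero, rfl⟩

end SymmetricTensor

section DoubleCentralizer

variable {K M : Type*} [Field K] [AddCommGroup M] [Module K M] [FiniteDimensional K M]

theorem exists_eq_lsmul_of_forall_commute {R : Type*} [Ring R] [Algebra K R] [Module R M]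
    [IsScalarTower K R M] [IsSemisimpleModule R M] {f : Module.End K M}
    (hf : ∀ T : Module.End R M, Commute f (T.restrictScalars K)) :
    ∃ r : R, f = Algebra.lsmul K K M r := by
  have : Module.Finite (Module.End R M) M := .of_restrictScalars_finite K _ _
  let f' : Module.End (Module.End R M) M :=
    { f with map_smul' := fun T x => DFunLike.congr_fun (hf T).eq x }
  obtain ⟨r, hr⟩ := Module.Finite.toModuleEnd_moduleEnd_surjective f'
  exact ⟨r, LinearMap.ext fun x => (DFunLike.congr_fun hr x).symm⟩

theorem exists_eq_sum_smul_of_forall_commute {G : Type*} [Group G] [Fintype G]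
    [NeZero (Nat.card G : K)] (ρ : Representation K G M) {f : Module.End K M}
    (hf : ∀ T : Module.End K M, (∀ g, Commute T (ρ g)) → Commute f T) :
    ∃ c : G → K, f = ∑ g, c g • ρ g := by
  let := Module.compHom M ρ.asAlgebraHom.toRingHom
  have smul_def (r : MonoidAlgebra K G) (x : M) : r • x = ρ.asAlgebraHom r x := rfl
  have : IsScalarTower K (MonoidAlgebra K G) M := ⟨fun c r x => by simp [smul_def]⟩
  obtain ⟨r, rfl⟩ := exists_eq_lsmul_of_forall_commute (R := MonoidAlgebra K G) fun T =>
    hf (T.restrictScalars K) fun g => LinearMap.ext fun x => by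
      simpa [smul_def] using T.map_smul (MonoidAlgebra.single g 1) x
  refine ⟨fun g => r.coeff g, ?_⟩
  calc Algebra.lsmul K K M r = ρ.asAlgebraHom r := rfl
    _ = ∑ g, r.coeff g • ρ g := by
      rw [Representation.asAlgebraHom_def, MonoidAlgebra.lift_apply,
        Finsupp.sum_fintype _ _ (by simp)]

end DoubleCentralizer

section SchurWeyl

variable (ι m K : Type*) [Field K]

/-- The action of `Equiv.Perm ι` on the tensor power `K^m ⊗ ⋯ ⊗ K^m` by permuting the factors; the
tensor power is modelled by its coordinates, functions of multi-indices `ι → m`. -/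
def permRep : Representation K (Equiv.Perm ι) ((ι → m) → K) where
  toFun σ := LinearMap.funLeft K K (· ∘ σ)
  map_one' := rfl
  map_mul' _ _ := rfl

variable {ι m K}

theorem permRep_apply (σ : Equiv.Perm ι) (x : (ι → m) → K) (I : ι → m) :
    permRep ι m K σ x I = x (I ∘ σ) :=
  rfl

variable [Fintype ι] [Fintype m] [DecidableEq ι] [DecidableEq m]

theorem toLin'_submatrix_one (σ : Equiv.Perm ι) :
    Matrix.toLin' ((1 : Matrix (ι → m) (ι → m) K).submatrix (· ∘ σ) id) = permRep ι m K σ := by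
  refine LinearMap.ext fun x => funext fun I => ?_
  simp [permRep_apply, Matrix.mulVec, dotProduct, Matrix.one_apply]

theorem submatrix_toMatrix'_of_commute_permRep {T : Module.End K ((ι → m) → K)}
    {σ : Equiv.Perm ι} (hT : Commute T (permRep ι m K σ)) :
    (LinearMap.toMatrix' T).submatrix (· ∘ σ) (· ∘ σ) = LinearMap.toMatrix' T := by
  ext I J
  have permRep_single : permRep ι m K σ (Pi.single (J ∘ σ) 1) = Pi.single J 1 := by
    ext I
    simp [permRep_apply, Pi.single_apply, σ.surjective.injective_comp_right.eq_iff]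
  calc LinearMap.toMatrix' T (I ∘ σ) (J ∘ σ)
    _ = permRep ι m K σ (T (Pi.single (J ∘ σ) 1)) I := rfl
    _ = T (permRep ι m K σ (Pi.single (J ∘ σ) 1)) I :=
      congrFun (LinearMap.congr_fun hT.eq.symm _) I
    _ = LinearMap.toMatrix' T I J := by rw [permRep_single, LinearMap.toMatrix'_apply]

variable [Infinite K] [NeZero (Nat.card (Equiv.Perm ι) : K)]

theorem exists_eq_sum_smul_of_forall_commute_tensorPow
    {Y : Matrix (ι → m) (ι → m) K} (hY : ∀ g : GL m K, Commute Y (tensorPow ι g.val)) :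
    ∃ c : Equiv.Perm ι → K,
      Y = ∑ σ, c σ • (1 : Matrix (ι → m) (ι → m) K).submatrix (· ∘ σ) id := by
  obtain ⟨c, hc⟩ := exists_eq_sum_smul_of_forall_commute (permRep ι m K) (f := Matrix.toLin' Y)
    fun T hT => by
      have T_mem := mem_span_tensorPow_GL fun σ => submatrix_toMatrix'_of_commute_permRep (hT σ)
      have span_le : Submodule.span K (Set.range fun g : GL m K => tensorPow ι g.val) ≤
          (Subalgebra.centralizer K {Y}).toSubmodule :=
        Submodule.span_le.2 <| Set.range_subset_iff.2 fun g => by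
          rintro _ rfl
          exact (hY g).eq
      have commute_T : Commute Y (LinearMap.toMatrix' T) := span_le T_mem Y rfl
      exact Matrix.toLin'_toMatrix' T ▸ commute_T.map Matrix.toLinAlgEquiv'
  refine ⟨c, Matrix.toLin'.injective ?_⟩
  simp only [hc, map_sum, map_smul, toLin'_submatrix_one]

end SchurWeyl

section FixedLift

theorem exists_fixed_of_map_fixed {K E W G : Type*} [Field K] [AddCommGroup E] [Module K E]
    [FiniteDimensional K E] [AddCommGroup W] [Module K W] {B : LinearMap.BilinForm K E}
    (hB : B.IsRefl) (B_anisotropic : ∀ x, B x x = 0 → x = 0) {ρ : G → Module.End K E}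
    (hρ : ∀ g, ∃ h, LinearMap.IsAdjointPair B B (ρ g) (ρ h)) {Φ : E →ₗ[K] W} {τ : G → W → W}
    (hΦ : ∀ g x, Φ (ρ g x) = τ g (Φ x)) {x : E} (hx : ∀ g, τ g (Φ x) = Φ x) :
    ∃ r, (∀ g, ρ g r = r) ∧ Φ r = Φ x := by
  have ker_stable (g : G) {y : E} (hy : y ∈ LinearMap.ker Φ) : ρ g y ∈ LinearMap.ker Φ := by
    rw [LinearMap.mem_ker] at hy ⊢
    rw [hΦ, hy, ← map_zero Φ, ← hΦ, map_zero]
  have orthogonal_stable (g : G) {y : E} (hy : y ∈ B.orthogonal (LinearMap.ker Φ)) :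
      ρ g y ∈ B.orthogonal (LinearMap.ker Φ) := by
    obtain ⟨h, hgh⟩ := hρ g
    exact fun u hu => hB _ _ ((hgh y u).trans (hB _ _ (hy _ (ker_stable h hu))))
  have disjoint : Disjoint (LinearMap.ker Φ) (B.orthogonal (LinearMap.ker Φ)) :=
    Submodule.disjoint_def.2 fun y hy hy' => B_anisotropic y (hy' y hy)
  have isCompl := (LinearMap.BilinForm.isCompl_orthogonal_iff_disjoint hB).2 disjoint
  obtain ⟨k, hk, r, hr, rfl⟩ := Submodule.mem_sup.1
    (isCompl.sup_eq_top.ge (Submodule.mem_top (x := x)))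
  have Φ_add : Φ (k + r) = Φ r := by rw [map_add, LinearMap.mem_ker.1 hk, zero_add]
  refine ⟨r, fun g => sub_eq_zero.1 (Submodule.disjoint_def.1 disjoint _ ?_ ?_), Φ_add.symm⟩
  · rw [LinearMap.mem_ker, map_sub, hΦ, ← Φ_add, hx, sub_self]
  · exact Submodule.sub_mem _ (orthogonal_stable g hr) hr

variable {K Q : Type*} {N : Q → Type*} [Field K] [∀ q, Fintype (N q)]

/-- Simultaneous conjugation `X_q ↦ P_q⁻¹ X_q P_q` of tuples of square matrices. The
inverse stands on the left because this is the transpose of `M_q ↦ P_q M_q P_q⁻¹` under the pairing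
`∑ q, tr (X_q M_q)`. -/
def conjLinearMap [∀ q, DecidableEq (N q)] (P : ∀ q, GL (N q) K) :
    Module.End K (∀ q, Matrix (N q) (N q) K) :=
  LinearMap.mulLeft K (fun q => (P q)⁻¹.val) ∘ₗ LinearMap.mulRight K fun q => (P q).val

theorem conjLinearMap_apply [∀ q, DecidableEq (N q)] (P : ∀ q, GL (N q) K)
    (X : ∀ q, Matrix (N q) (N q) K) (q : Q) :
    conjLinearMap P X q = (P q)⁻¹.val * (X q * (P q).val) :=
  rfl

variable [Fintype Q]

/-- The Frobenius form `(X, Y) ↦ ∑ q, tr (X_qᵀ Y_q)` on tuples of square matrices, for which the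
adjoint of conjugation by `P` is conjugation by `Pᵀ`. -/
def frobeniusForm : LinearMap.BilinForm K (∀ q, Matrix (N q) (N q) K) :=
  LinearMap.mk₂ K (fun X Y => ∑ q, ((X q)ᵀ * Y q).trace)
    (by simp [Matrix.add_mul, Finset.sum_add_distrib]) (by simp [Finset.mul_sum])
    (by simp [Matrix.mul_add, Finset.sum_add_distrib]) (by simp [Finset.mul_sum])

theorem frobeniusForm_apply (X Y : ∀ q, Matrix (N q) (N q) K) :
    frobeniusForm X Y = ∑ q, ((X q)ᵀ * Y q).trace :=
  rfl

theorem frobeniusForm_isSymm : (frobeniusForm (N := N) (K := K)).IsSymm :=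
  ⟨fun X Y => Finset.sum_congr rfl fun q _ => by
    rw [← Matrix.trace_transpose, Matrix.transpose_mul, Matrix.transpose_transpose]⟩

theorem eq_zero_of_frobeniusForm_self [LinearOrder K] [IsStrictOrderedRing K]
    {X : ∀ q, Matrix (N q) (N q) K} (h : frobeniusForm X X = 0) : X = 0 := by
  simp_rw [frobeniusForm_apply, ← Matrix.vec_dotProduct_vec] at h
  have vec_dotProduct_vec_eq_zero := (Finset.sum_eq_zero_iff_of_nonneg fun q _ =>
    Finset.sum_nonneg fun _ _ => mul_self_nonneg _).1 h
  exact funext fun q => Matrix.vec_eq_zero_iff.1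
    (dotProduct_self_eq_zero.1 (vec_dotProduct_vec_eq_zero q (Finset.mem_univ q)))

variable {V G : Type*} [CommRing V] [Algebra K V]

variable (K) in
/-- The linear map `X ↦ ∑ q, tr (X_q M_q)` on tuples of square matrices, through which elements of
`V` are lifted to tuples of matrices over `K`. -/
def traceMulLinearMap (M : ∀ q, Matrix (N q) (N q) V) : (∀ q, Matrix (N q) (N q) K) →ₗ[K] V where
  toFun X := ∑ q, ((X q).map (algebraMap K V) * M q).trace
  map_add' X Y := by simp [Matrix.map_add, Matrix.add_mul, Finset.sum_add_distrib]
  map_smul' c X := by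
    simp [Matrix.trace, Matrix.mul_apply, ← Algebra.smul_def, Finset.smul_sum]

theorem traceMulLinearMap_apply (M : ∀ q, Matrix (N q) (N q) V) (X : ∀ q, Matrix (N q) (N q) K) :
    traceMulLinearMap K M X = ∑ q, ((X q).map (algebraMap K V) * M q).trace :=
  rfl

theorem map_traceMulLinearMap (φ : V →ₗ[K] V) (M : ∀ q, Matrix (N q) (N q) V)
    (X : ∀ q, Matrix (N q) (N q) K) :
    φ (traceMulLinearMap K M X) = traceMulLinearMap K (fun q => (M q).map φ) X := by
  simp [traceMulLinearMap_apply, Matrix.trace, Matrix.mul_apply, ← Algebra.smul_def]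

variable [∀ q, DecidableEq (N q)]

theorem isAdjointPair_conjLinearMap {P P' : ∀ q, GL (N q) K} (h : ∀ q, (P' q).val = (P q).valᵀ) :
    LinearMap.IsAdjointPair frobeniusForm frobeniusForm (conjLinearMap P) (conjLinearMap P') := by
  refine fun X Y => Finset.sum_congr rfl fun q _ => ?_
  have inv_eq : (P' q)⁻¹.val = (P q)⁻¹.valᵀ := by
    rw [Matrix.coe_units_inv, Matrix.coe_units_inv, h, Matrix.transpose_nonsing_inv]
  simp only [conjLinearMap_apply, h, inv_eq, Matrix.transpose_mul]
  rw [Matrix.mul_assoc, Matrix.mul_assoc, Matrix.trace_mul_comm]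
  simp only [Matrix.mul_assoc]

theorem traceMulLinearMap_conjLinearMap (P : ∀ q, GL (N q) K) (M : ∀ q, Matrix (N q) (N q) V)
    (X : ∀ q, Matrix (N q) (N q) K) :
    traceMulLinearMap K M (conjLinearMap P X) =
      traceMulLinearMap K (fun q => (P q).val.map (algebraMap K V) * M q *
        (P q)⁻¹.val.map (algebraMap K V)) X := by
  refine Finset.sum_congr rfl fun q _ => ?_
  rw [conjLinearMap_apply, Matrix.map_mul, Matrix.map_mul, Matrix.mul_assoc, Matrix.trace_mul_comm]
  simp only [Matrix.mul_assoc]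

theorem exists_forall_commute_traceMulLinearMap_eq [LinearOrder K] [IsStrictOrderedRing K]
    {T : G → ∀ q, GL (N q) K} (hT : ∀ g, ∃ h, ∀ q, (T h q).val = (T g q).valᵀ)
    {M : ∀ q, Matrix (N q) (N q) V} {τ : G → V →ₗ[K] V}
    (hτ : ∀ g q, (M q).map (τ g) =
      (T g q).val.map (algebraMap K V) * M q * (T g q)⁻¹.val.map (algebraMap K V))
    {X : ∀ q, Matrix (N q) (N q) K}
    (hX : ∀ g, τ g (traceMulLinearMap K M X) = traceMulLinearMap K M X) :
    ∃ Y : ∀ q, Matrix (N q) (N q) K, (∀ g q, Commute (Y q) (T g q).val) ∧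
      traceMulLinearMap K M Y = traceMulLinearMap K M X := by
  obtain ⟨Y, hY, trace_eq⟩ := exists_fixed_of_map_fixed frobeniusForm_isSymm.isRefl
    (fun _ => eq_zero_of_frobeniusForm_self) (ρ := fun g => conjLinearMap (T g))
    (fun g => (hT g).imp fun h => isAdjointPair_conjLinearMap)
    (fun g Z => by rw [traceMulLinearMap_conjLinearMap, map_traceMulLinearMap]; simp only [hτ]) hX
  exact ⟨Y, fun g q => (Units.inv_mul_eq_iff_eq_mul (T g q)).1 (congrFun (hY g) q), trace_eq⟩

end FixedLift

section Generation

theorem exists_sum_smul_prod_eq_of_mem_adjoin_range {R V α : Type*} [CommSemiring R] [Semiring V]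
    [Algebra R V] {y : α → V} {v : V} (hv : v ∈ Algebra.adjoin R (Set.range y)) :
    ∃ c : List α →₀ R, (c.sum fun l r => r • (l.map y).prod) = v := by
  have closure_eq : (Submonoid.closure (Set.range y) : Set V) =
      Set.range fun l : List α => (l.map y).prod := by
    rw [← FreeMonoid.mrange_lift, MonoidHom.coe_mrange]
    exact congrArg Set.range (funext (FreeMonoid.lift_apply y))
  rwa [← Subalgebra.mem_toSubmodule, Algebra.adjoin_eq_span, closure_eq,
    Finsupp.mem_span_range_iff_exists_finsupp] at hv

variable {K R V m β : Type*} [Field K] [CommRing V] [Algebra K V] [CommRing R] [Algebra R V]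
  [Fintype m]

theorem exists_traceMulLinearMap_piKronecker_eq {M : β → Matrix m m V} {v : V}
    (hv : v ∈ Algebra.adjoin R (Set.range fun p : β × m × m => M p.1 p.2.1 p.2.2)) :
    ∃ (Q : Finset (List (β × m × m))) (c : Q → R)
      (X : ∀ q : Q, Matrix (Fin q.1.length → m) (Fin q.1.length → m) K),
      traceMulLinearMap K (fun q => c q • piKronecker fun s => M (q.1[s]).1) X = v := by
  classical
  obtain ⟨c, rfl⟩ := exists_sum_smul_prod_eq_of_mem_adjoin_range hv
  refine ⟨c.support, fun q => c q, fun q =>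
    Matrix.single (fun s => q.1[s].2.2) (fun s => q.1[s].2.1) 1, ?_⟩
  rw [traceMulLinearMap_apply, Finsupp.sum,
    ← Finset.sum_coe_sort c.support fun l => c l • (l.map _).prod]
  refine Finset.sum_congr rfl fun q _ => ?_
  rw [Matrix.map_single _ _ _ (algebraMap K V), map_one, Matrix.trace_single_mul, one_smul,
    ← Fin.prod_univ_fun_getElem]
  rfl

variable [DecidableEq m]

theorem piKronecker_map_eq_conj {ι H : Type*} [Fintype ι] [DecidableEq ι] [FunLike H V V]
    [MonoidHomClass H V V] (φ : H) (g : GL m K) {M : ι → Matrix m m V}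
    (hM : ∀ s, (M s).map φ = g.val.map (algebraMap K V) * M s * g⁻¹.val.map (algebraMap K V)) :
    (piKronecker M).map φ = (tensorPow ι g.val).map (algebraMap K V) * piKronecker M *
      (tensorPow ι g⁻¹.val).map (algebraMap K V) := by
  have tensorPow_map (P : Matrix m m K) : (tensorPow ι P).map (algebraMap K V) =
      piKronecker fun _ => P.map (algebraMap K V) :=
    piKronecker_map (algebraMap K V : K →* V) _
  rw [tensorPow_map, tensorPow_map, ← piKronecker_mul, ← piKronecker_mul]
  exact (piKronecker_map (φ : V →* V) M).trans (congrArg piKronecker (funext hM))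

theorem trace_map_mul_piKronecker_mem {ι : Type*} [Fintype ι] [DecidableEq ι] [CharZero K]
    [Algebra K R] [IsScalarTower K R V] {U : Subsemigroup (Matrix m m V)} {S : Subalgebra R V}
    (hU : ∀ M ∈ U, M.trace ∈ S)
    {Y : Matrix (ι → m) (ι → m) K} (hY : ∀ g : GL m K, Commute Y (tensorPow ι g.val))
    {M : ι → Matrix m m V} (hM : ∀ s, M s ∈ U) :
    (Y.map (algebraMap K V) * piKronecker M).trace ∈ S := by
  have : NeZero (Nat.card (Equiv.Perm ι) : K) := ⟨Nat.cast_ne_zero.2 Nat.card_pos.ne'⟩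
  obtain ⟨c, rfl⟩ := exists_eq_sum_smul_of_forall_commute_tensorPow hY
  have map_submatrix_one (σ : Equiv.Perm ι) : (Algebra.ofId K V).mapMatrix
      ((1 : Matrix (ι → m) (ι → m) K).submatrix (· ∘ σ) id) = Matrix.submatrix 1 (· ∘ σ) id := by
    rw [AlgHom.mapMatrix_apply, ← Matrix.submatrix_map, Matrix.map_one _ (map_zero _) (map_one _)]
  change Matrix.trace ((Algebra.ofId K V).mapMatrix _ * piKronecker M) ∈ S
  simp only [map_sum, map_smul, map_submatrix_one, Finset.sum_mul, Matrix.trace_sum,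
    Matrix.smul_mul, Matrix.trace_smul, trace_submatrix_one_mul_piKronecker]
  exact sum_mem fun σ _ =>
    (S.restrictScalars K).smul_mem (permTrace_mem (S := S.toSubmonoid) hU σ hM) _

end Generation

section Invariants

theorem mem_adjoin_trace_of_forall_fixed {K R V m : Type*} [Field K] [LinearOrder K]
    [IsStrictOrderedRing K] [CommRing R] [Algebra K R] [CommRing V] [Algebra K V] [Algebra R V]
    [IsScalarTower K R V] [Fintype m] [DecidableEq m] {U : Subsemigroup (Matrix m m V)}
    {σ : GL m K → V →ₐ[R] V}
    (hσ : ∀ g, ∀ M ∈ U, M.map (σ g) =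
      g.val.map (algebraMap K V) * M * g⁻¹.val.map (algebraMap K V))
    {v : V} (hv : v ∈ Algebra.adjoin R (Set.range fun p : U × m × m => p.1.val p.2.1 p.2.2))
    (hv_fixed : ∀ g, σ g v = v) :
    v ∈ Algebra.adjoin R (Matrix.trace '' (U : Set (Matrix m m V))) := by
  obtain ⟨Q, c, X, rfl⟩ := exists_traceMulLinearMap_piKronecker_eq (K := K) hv
  let T (g : GL m K) (q : Q) : GL (Fin q.1.length → m) K := Units.map (tensorPow _) g
  have T_transpose (g : GL m K) : ∃ h, ∀ q, (T h q).val = (T g q).valᵀ := by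
    have det_ne_zero : g.valᵀ.det ≠ 0 := by
      rw [Matrix.det_transpose]
      exact g.det_ne_zero
    exact ⟨.mkOfDetNeZero g.valᵀ det_ne_zero, fun q => tensorPow_transpose _ g.val⟩
  let D (q : Q) : Matrix (Fin q.1.length → m) (Fin q.1.length → m) V :=
    c q • piKronecker fun s => (q.1[s]).1.val
  have map_D (g : GL m K) (q : Q) : (D q).map (σ g) =
      (T g q).val.map (algebraMap K V) * D q * (T g q)⁻¹.val.map (algebraMap K V) := by
    rw [Matrix.map_smul (σ g) (c q) (map_smul (σ g) (c q)), Matrix.mul_smul, Matrix.smul_mul,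
      piKronecker_map_eq_conj (σ g) g fun s => hσ g _ (q.1[s]).1.2]
    rfl
  obtain ⟨Y, hY, trace_eq⟩ := exists_forall_commute_traceMulLinearMap_eq
    (τ := fun g => ((σ g).restrictScalars K).toLinearMap) T_transpose map_D hv_fixed
  rw [← trace_eq, traceMulLinearMap_apply]
  refine Subalgebra.sum_mem _ fun q _ => ?_
  rw [Matrix.mul_smul, Matrix.trace_smul]
  refine Subalgebra.smul_mem _ ?_ _
  have trace_mem (M : Matrix m m V) (hM : M ∈ U) :
      M.trace ∈ Algebra.adjoin R (Matrix.trace '' (U : Set (Matrix m m V))) :=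
    Algebra.subset_adjoin ⟨M, hM, rfl⟩
  exact trace_map_mul_piKronecker_mem trace_mem (fun g => hY g q) fun s => (q.1[s]).1.2

theorem IsUniversalRep.adjoin_entries_eq_top {K : Type u} [Field K] {B : Type v} [CommRing B]
    [Algebra K B] {d : ℕ} {V : Type w} [CommRing V] [Algebra K V]
    {π : B →ₐ[K] Matrix (Fin d) (Fin d) V} (hπ : IsUniversalRep K B d π) :
    Algebra.adjoin K (Set.range fun p : B × Fin d × Fin d => π p.1 p.2.1 p.2.2) = ⊤ := by
  set S := Algebra.adjoin K (Set.range fun p : B × Fin d × Fin d => π p.1 p.2.1 p.2.2)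
  let incl : Matrix (Fin d) (Fin d) S →ₐ[K] Matrix (Fin d) (Fin d) V := S.val.mapMatrix
  have incl_injective : Function.Injective incl := Matrix.map_injective Subtype.val_injective
  have mem_range (b : B) : π b ∈ incl.range :=
    ⟨Matrix.of fun i j => ⟨π b i j, Algebra.subset_adjoin ⟨(b, i, j), rfl⟩⟩, rfl⟩
  let e := AlgEquiv.ofInjective incl incl_injective
  obtain ⟨ρ, hρ⟩ := (hπ S).2 (e.symm.toAlgHom.comp (π.codRestrict incl.range mem_range))
  have val_comp_ρ : S.val.comp ρ = AlgHom.id K V := (hπ V).1 <| AlgHom.ext fun b =>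
    calc incl (ρ.mapMatrix (π b))
      _ = e (e.symm (π.codRestrict incl.range mem_range b)) :=
        congrArg incl (DFunLike.congr_fun hρ b)
      _ = π b := congrArg Subtype.val (e.apply_symm_apply _)
  exact eq_top_iff.2 fun x _ =>
    (show (ρ x : V) = x from DFunLike.congr_fun val_comp_ρ x) ▸ (ρ x).2

theorem map_trace_eq_of_map_eq_conj {V m H : Type*} [CommRing V] [Fintype m] [DecidableEq m]
    [FunLike H V V] [AddMonoidHomClass H V V] {φ : H} (P : GL m V) {M : Matrix m m V}
    (h : M.map φ = P.val * M * P⁻¹.val) : φ M.trace = M.trace := by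
  rw [AddMonoidHom.map_trace, h, Matrix.trace_units_conj]

theorem invariants_generated_by_traces_general {R B V m : Type*} [CommRing R] [Algebra ℚ R]
    [Semiring B] [Algebra R B] [CommRing V] [Algebra R V] [Fintype m] [DecidableEq m]
    (π : B →ₐ[R] Matrix m m V)
    (hπ : Algebra.adjoin R (Set.range fun p : B × m × m => π p.1 p.2.1 p.2.2) = ⊤)
    (σ : GL m R → V →ₐ[R] V)
    (hσ : ∀ g b, (σ g).mapMatrix (π b) =
      g.val.map (algebraMap R V) * π b * g⁻¹.val.map (algebraMap R V)) :
    (Algebra.adjoin R {x | ∃ b, x = (π b).trace} : Set V) = {v | ∀ g, σ g v = v} := by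
  refine Set.Subset.antisymm (fun v hv g => ?_) fun v hv => ?_
  · refine Algebra.adjoin_le (S := AlgHom.equalizer (σ g) (AlgHom.id R V)) ?_ hv
    rintro _ ⟨b, rfl⟩
    exact map_trace_eq_of_map_eq_conj (Matrix.GeneralLinearGroup.map (algebraMap R V) g) (hσ g b)
  · let := Algebra.compHom V (algebraMap ℚ R)
    have : IsScalarTower ℚ R V := .of_algebraMap_eq fun _ => rfl
    let U := π.range.toSubmonoid.toSubsemigroup
    have entries_subset : (Set.range fun p : B × m × m => π p.1 p.2.1 p.2.2) ⊆
        Set.range fun p : U × m × m => p.1.val p.2.1 p.2.2 := by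
      rintro _ ⟨⟨b, i, j⟩, rfl⟩
      exact ⟨(⟨π b, b, rfl⟩, i, j), rfl⟩
    have trace_mem := mem_adjoin_trace_of_forall_fixed (K := ℚ) (U := U)
      (σ := fun g => σ (Matrix.GeneralLinearGroup.map (algebraMap ℚ R) g))
      (by rintro g _ ⟨b, rfl⟩; exact hσ _ b)
      (Algebra.adjoin_mono entries_subset (hπ.ge (Algebra.mem_top (x := v)))) fun g => hv _
    refine Algebra.adjoin_mono ?_ trace_mem
    rintro _ ⟨_, ⟨b, rfl⟩, rfl⟩
    exact ⟨b, rfl⟩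

end Invariants

/-- **Invariants are generated by traces (char 0).** Over a field `F` of characteristic
zero, if `(V, π)` is the universal `n`-dimensional representation of the commutative
`F`-algebra `A` and `GL_n(F)` acts on `V` via conjugation of `π`, then the invariant
subalgebra `V^{GL_n(F)}` is generated as an `F`-algebra by the traces `tr (π a)`, `a ∈ A`. -/
theorem invariants_generated_by_traces (V : Type w) [CommRing V] [Algebra F V]
    (π : A →ₐ[F] Matrix (Fin n) (Fin n) V) (hπ : IsUniversalRep F A n π)
    (σ : GL (Fin n) F → (V →ₐ[F] V)) (hσ : IsConjAction F A n π σ) :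
    Algebra.adjoin F {x : V | ∃ a : A, x = Matrix.trace (π a)} = fixedSubalgebra F σ :=
  SetLike.coe_injective <|
    invariants_generated_by_traces_general π hπ.adjoin_entries_eq_top σ hσ

end SymmetricProduct
end

section
/- Let F be a commutative ring, A a commutative F-algebra that is flat as an F-module, and n a natural number. Let γ_n : A → TS^n_F(A) be the polynomial law whose component at each commutative F-algebra L sends x ∈ L ⊗_F A to its n-th power tensor x^{⊗n} ∈ (L ⊗_F A)^{⊗_L n} ≅ L ⊗_F A^{⊗n}, which lies in L ⊗_F TS^n_F(A). Then for every commutative F-algebra B, the map from AlgHom_F(TS^n_F(A), B) to the set of multiplicative polynomial laws A → B that are homogeneous of degree n, sending ρ to the polynomial law ρ ∘ γ_n, is a bijection. -/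
open scoped TensorProduct
open PiTensorProduct

universe u v w

set_option synthInstance.maxHeartbeats 1000000
set_option maxHeartbeats 1600000

namespace SymmetricProduct

variable (F : Type u) [CommRing F] (A : Type v) [CommRing A] [Algebra F A] (n : ℕ)

/-- The algebra homomorphism on the `n`-fold tensor power permuting factors by `σ`. -/
noncomputable def permHom (σ : Equiv.Perm (Fin n)) :
    (⨂[F] _ : Fin n, A) →ₐ[F] (⨂[F] _ : Fin n, A) :=
  PiTensorProduct.liftAlgHom (MultilinearMap.domDomCongr σ (PiTensorProduct.tprod F))
    (by simp [MultilinearMap.domDomCongr_apply]; rfl)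
    (fun x y => by
      simp only [MultilinearMap.domDomCongr_apply]
      rw [tprod_mul_tprod]; rfl)

@[simp] lemma permHom_tprod (σ : Equiv.Perm (Fin n)) (x : Fin n → A) :
    permHom F A n σ (tprod F x) = tprod F (fun i => x (σ i)) := by
  simp [permHom]

/-- `TS^n_F(A)`: the subalgebra of symmetric tensors in the `n`-fold tensor power of `A`. -/
noncomputable def TS : Subalgebra F (⨂[F] _ : Fin n, A) where
  carrier := {x | ∀ σ : Equiv.Perm (Fin n), permHom F A n σ x = x}
  mul_mem' := fun hx hy σ => by rw [_root_.map_mul, hx σ, hy σ]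
  add_mem' := fun hx hy σ => by rw [_root_.map_add, hx σ, hy σ]
  one_mem' := fun σ => map_one _
  algebraMap_mem' := fun r σ => AlgHom.commutes _ r

/-- `e_i^n(a)`: the sum over `i`-element subsets `S` of `Fin n` of the elementary tensors
having `a` in the slots of `S` and `1` elsewhere. -/
noncomputable def esym (i : ℕ) (a : A) : ⨂[F] _ : Fin n, A :=
  ∑ S ∈ Finset.powersetCard i (Finset.univ : Finset (Fin n)),
    tprod F (fun j => if j ∈ S then a else 1)

lemma esym_mem (i : ℕ) (a : A) : esym F A n i a ∈ TS F A n := by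
  intro σ
  rw [esym, map_sum]
  simp only [permHom_tprod]
  refine Finset.sum_nbij' (fun S => S.map σ.symm.toEmbedding)
    (fun S => S.map σ.toEmbedding) ?_ ?_ ?_ ?_ ?_
  · intro S hS
    simp only [Finset.mem_powersetCard_univ, Finset.card_map] at hS ⊢
    exact hS
  · intro S hS
    simp only [Finset.mem_powersetCard_univ, Finset.card_map] at hS ⊢
    exact hS
  · intro S hS
    ext j
    simp
  · intro S hS
    ext j
    simp
  · intro S hS
    congr 1
    funext j
    have hiff : (σ j ∈ S) ↔ (j ∈ Finset.map σ.symm.toEmbedding S) := by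
      constructor
      · intro h
        exact Finset.mem_map.2 ⟨σ j, h, σ.symm_apply_apply j⟩
      · intro h
        obtain ⟨s, hs, rfl⟩ := Finset.mem_map.1 h
        simpa using hs
    simp only [hiff]

/-- `e_i^n(a)` as an element of `TS^n_F(A)`. -/
noncomputable def esymT (i : ℕ) (a : A) : TS F A n := ⟨esym F A n i a, esym_mem F A n i a⟩

lemma tprod_const_mem (a : A) : (tprod F (fun _ : Fin n => a)) ∈ TS F A n := fun σ => by
  simp

/-- `a^{⊗ n}` as an element of `TS^n_F(A)`. -/
noncomputable def tpow (a : A) : TS F A n := ⟨tprod F (fun _ : Fin n => a), tprod_const_mem F A n a⟩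


/-- A family of maps `L ⊗ M → L ⊗ N`, indexed by the commutative `F`-algebras `L`, is a
polynomial law when it is natural in `L`, i.e. commutes with base change along every
`F`-algebra homomorphism. -/
def IsPolyLaw (M : Type v) [AddCommMonoid M] [Module F M]
    (N : Type w) [AddCommMonoid N] [Module F N]
    (φ : ∀ (L : Type u) [CommRing L] [Algebra F L], L ⊗[F] M → L ⊗[F] N) : Prop :=
  ∀ (L L' : Type u) [CommRing L] [Algebra F L] [CommRing L'] [Algebra F L']
    (f : L →ₐ[F] L') (x : L ⊗[F] M),
      φ L' (LinearMap.rTensor M f.toLinearMap x) = LinearMap.rTensor N f.toLinearMap (φ L x)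

/-- A family of maps `L ⊗ M → L ⊗ N` is homogeneous of degree `m` if
`φ_L (c • x) = c^m • φ_L x` for every `L`, `c ∈ L` and `x ∈ L ⊗ M`. -/
def IsHomogeneousLaw (M : Type v) [AddCommMonoid M] [Module F M]
    (N : Type w) [AddCommMonoid N] [Module F N] (m : ℕ)
    (φ : ∀ (L : Type u) [CommRing L] [Algebra F L], L ⊗[F] M → L ⊗[F] N) : Prop :=
  ∀ (L : Type u) [CommRing L] [Algebra F L] (c : L) (x : L ⊗[F] M),
    φ L (c • x) = c ^ m • φ L x

/-- A family of maps `L ⊗ M → L ⊗ N` between algebras is multiplicative if each component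
preserves products and units. -/
def IsMultiplicativeLaw (M : Type v) [CommRing M] [Algebra F M]
    (N : Type w) [CommRing N] [Algebra F N]
    (φ : ∀ (L : Type u) [CommRing L] [Algebra F L], L ⊗[F] M → L ⊗[F] N) : Prop :=
  ∀ (L : Type u) [CommRing L] [Algebra F L],
    (∀ x y : L ⊗[F] M, φ L (x * y) = φ L x * φ L y) ∧ φ L (1 : L ⊗[F] M) = 1

/-- The `L`-component of the `n`-th power polynomial law with values in the full tensor
power: `x ↦ x^{⊗n}`, realized inside `L ⊗ A^{⊗n}` as the product over the `n` slots of the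
images of `x` under the slot inclusions `A → A^{⊗n}` (on a pure tensor `c ⊗ a` it gives
`c^n ⊗ (a ⊗ ⋯ ⊗ a)`). -/
noncomputable def gammaFull (L : Type u) [CommRing L] [Algebra F L] (x : L ⊗[F] A) :
    L ⊗[F] (⨂[F] _ : Fin n, A) :=
  ∏ i : Fin n,
    Algebra.TensorProduct.map (AlgHom.id F L)
      (PiTensorProduct.singleAlgHom (R := F) (A := fun _ : Fin n => A) i) x

/-- Composition of an algebra homomorphism `ρ : TS^n_F(A) → B` with a
`TS^n_F(A)`-valued polynomial law `γ`, giving a polynomial law `A → B`. -/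
noncomputable def compGamma
    (γ : ∀ (L : Type u) [CommRing L] [Algebra F L], L ⊗[F] A → L ⊗[F] ↥(TS F A n))
    (B : Type w) [CommRing B] [Algebra F B] (ρ : TS F A n →ₐ[F] B) :
    ∀ (L : Type u) [CommRing L] [Algebra F L], L ⊗[F] A → L ⊗[F] B :=
  fun L _ _ x => Algebra.TensorProduct.map (AlgHom.id F L) ρ (γ L x)


end SymmetricProduct

/-!
For a functional `c : L → F`, a law `φ : A → N` and `x ∈ L ⊗ A`, consider the contraction
`c(φ_L(x)) ∈ N`. Since it is enough to know a law on the generic elements `∑ Xⱼ ⊗ aⱼ` over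
polynomial rings, which are free, its contractions determine it. When `A` is flat, the
contractions of `γ_n` fill `TS^n(A)`, and a linear relation among the contractions of `γ_n` holds
among those of every law homogeneous of degree `n`; so `c(γ_n(x)) ↦ c(φ(x))` is a well-defined
linear map `TS^n(A) → N`, the only one carrying `γ_n` to `φ`.

Both facts are clear when `A` is free. In general, cover `A` by a free algebra `π : M → A`. The
equational criterion for flatness provides endomorphisms `g` of the module `M` over `A`, that is
with `π ∘ g = π`, killing any given finite subset of `ker π`. A tensor over `M` that vanishes over
`A` is killed by a suitable `g^{⊗n}`, and a tensor over `M` that becomes symmetric over `A` is made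
symmetric by one.
-/

namespace SymmetricProduct

section Contract

variable {F : Type*} [CommRing F] {L : Type*} [AddCommGroup L] [Module F L]
  {L' : Type*} [AddCommGroup L'] [Module F L']
  {N : Type*} [AddCommGroup N] [Module F N] {N' : Type*} [AddCommGroup N'] [Module F N']

/-- The contraction `l ⊗ x ↦ c(l) x` of a tensor along a linear functional `c` on its left
factor. Over the scalar extensions `L` of a polynomial law, it turns values of the law into
elements of its target. -/
noncomputable def contract (c : L →ₗ[F] F) : L ⊗[F] N →ₗ[F] N :=
  (TensorProduct.lid F N).toLinearMap ∘ₗ c.rTensor N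

@[simp]
lemma contract_tmul (c : L →ₗ[F] F) (l : L) (x : N) : contract c (l ⊗ₜ[F] x) = c l • x := by
  simp [contract]

lemma contract_lTensor (c : L →ₗ[F] F) (f : N →ₗ[F] N') (z : L ⊗[F] N) :
    contract c (f.lTensor L z) = f (contract c z) := by
  induction z with
  | zero => simp only [map_zero]
  | tmul l x => simp only [LinearMap.lTensor_tmul, contract_tmul, map_smul]
  | add z₁ z₂ h₁ h₂ => simp only [map_add, h₁, h₂]

lemma contract_rTensor (c : L' →ₗ[F] F) (h : L →ₗ[F] L') (z : L ⊗[F] N) :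
    contract c (h.rTensor N z) = contract (c ∘ₗ h) z := by
  simp only [contract, LinearMap.comp_apply, LinearMap.rTensor_comp_apply]

lemma contract_smul (a : F) (c : L →ₗ[F] F) (z : L ⊗[F] N) :
    contract (a • c) z = a • contract c z := by
  simp only [contract, LinearMap.rTensor_smul, LinearMap.comp_apply, LinearMap.smul_apply,
    map_smul]

lemma contract_add (c c' : L →ₗ[F] F) (z : L ⊗[F] N) :
    contract (c + c') z = contract c z + contract c' z := by
  simp only [contract, LinearMap.rTensor_add, LinearMap.comp_apply, LinearMap.add_apply, map_add]

lemma eq_of_contract_eq [Module.Free F L] {z z' : L ⊗[F] N}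
    (h : ∀ c : L →ₗ[F] F, contract c z = contract c z') : z = z' := by
  classical
  let β := Module.Free.chooseBasis F L
  refine (TensorProduct.equivFinsuppOfBasisLeft β).injective (Finsupp.ext fun i => ?_)
  simp only [TensorProduct.equivFinsuppOfBasisLeft_apply]
  exact h (β.coord i)

lemma mem_range_lTensor_of_contract_mem_range [Module.Free F L] (j : N' →ₗ[F] N)
    {z : L ⊗[F] N} (h : ∀ c : L →ₗ[F] F, contract c z ∈ LinearMap.range j) :
    z ∈ LinearMap.range (j.lTensor L) := by
  classical
  let β := Module.Free.chooseBasis F L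
  choose y hy using fun i => h (β.coord i)
  rw [← (TensorProduct.equivFinsuppOfBasisLeft (N := N) β).symm_apply_apply z,
    TensorProduct.equivFinsuppOfBasisLeft_symm_apply]
  refine Submodule.sum_mem _ fun i _ => ⟨β i ⊗ₜ y i, ?_⟩
  rw [LinearMap.lTensor_tmul, hy, TensorProduct.equivFinsuppOfBasisLeft_apply]
  rfl

lemma lTensor_rTensor_comm (g : N →ₗ[F] N') (f : L →ₗ[F] L') (z : L ⊗[F] N) :
    g.lTensor L' (f.rTensor N z) = f.rTensor N' (g.lTensor L z) := by
  simp only [← LinearMap.comp_apply, LinearMap.lTensor_comp_rTensor,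
    LinearMap.rTensor_comp_lTensor]

end Contract

section ContractMul

variable {F : Type*} [CommRing F] {L : Type*} [CommRing L] [Algebra F L]
  {L' : Type*} [CommRing L'] [Algebra F L'] {N : Type*} [CommRing N] [Algebra F N]

lemma contract_mul_contract (c : L →ₗ[F] F) (c' : L' →ₗ[F] F) (z : L ⊗[F] N) (z' : L' ⊗[F] N) :
    contract (LinearMap.mul' F F ∘ₗ TensorProduct.map c c')
        ((Algebra.TensorProduct.includeLeft : L →ₐ[F] L ⊗[F] L').toLinearMap.rTensor N z *
          (Algebra.TensorProduct.includeRight : L' →ₐ[F] L ⊗[F] L').toLinearMap.rTensor N z') =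
      contract c z * contract c' z' := by
  induction z with
  | zero => simp only [map_zero, zero_mul]
  | add z₁ z₂ h₁ h₂ => simp only [map_add, add_mul, h₁, h₂]
  | tmul l x =>
    induction z' with
    | zero => simp only [map_zero, mul_zero]
    | add z₁ z₂ h₁ h₂ => simp only [map_add, mul_add, h₁, h₂]
    | tmul l' x' => simp [smul_smul, mul_comm]

end ContractMul

section Generic

variable {F : Type*} [CommRing F] {L : Type*} [CommRing L] [Algebra F L]
  {M : Type*} [AddCommGroup M] [Module F M]

/-- The generic linear combination `X₁ ⊗ a₁ + ⋯ + Xₘ ⊗ aₘ`, from which every linear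
combination of the `aⱼ` with coefficients in an `F`-algebra arises by base change. -/
noncomputable def generic {m : ℕ} (a : Fin m → M) : MvPolynomial (Fin m) F ⊗[F] M :=
  ∑ j, MvPolynomial.X j ⊗ₜ[F] a j

lemma rTensor_aeval_generic {m : ℕ} (l : Fin m → L) (a : Fin m → M) :
    (MvPolynomial.aeval l : MvPolynomial (Fin m) F →ₐ[F] L).toLinearMap.rTensor M (generic a) =
      ∑ j, l j ⊗ₜ[F] a j := by
  simp only [generic, map_sum, LinearMap.rTensor_tmul, AlgHom.toLinearMap_apply,
    MvPolynomial.aeval_X]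

lemma exists_rTensor_generic_eq (x : L ⊗[F] M) :
    ∃ (m : ℕ) (a : Fin m → M) (θ : MvPolynomial (Fin m) F →ₐ[F] L),
      θ.toLinearMap.rTensor M (generic a) = x := by
  obtain ⟨m, l, a, rfl⟩ := TensorProduct.exists_sum_tmul_eq x
  exact ⟨m, a, MvPolynomial.aeval l, rTensor_aeval_generic l a⟩

end Generic

section GammaFull

variable {F : Type u} [CommRing F] {A : Type v} [CommRing A] [Algebra F A] (n : ℕ)
  {L : Type u} [CommRing L] [Algebra F L] {L' : Type u} [CommRing L'] [Algebra F L']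

lemma prod_singleAlgHom (a : Fin n → A) :
    ∏ i, singleAlgHom (R := F) (A := fun _ : Fin n => A) i (a i) = PiTensorProduct.tprod F a :=
  (tprod_prod (R := F) (A := fun _ : Fin n => A) Finset.univ
    fun i => Pi.mulSingle i (a i)).symm.trans
      (congrArg (PiTensorProduct.tprod F) (Finset.univ_prod_mulSingle a))

lemma prod_tmul_prod {ι R : Type*} [CommRing R] [Algebra F R] (s : Finset ι) (l : ι → L)
    (y : ι → R) : (∏ i ∈ s, l i) ⊗ₜ[F] (∏ i ∈ s, y i) = ∏ i ∈ s, l i ⊗ₜ[F] y i := by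
  classical
  induction s using Finset.induction_on with
  | empty => rfl
  | insert i s hi ih =>
    rw [Finset.prod_insert hi, Finset.prod_insert hi, Finset.prod_insert hi, ← ih,
      Algebra.TensorProduct.tmul_mul_tmul]

lemma gammaFull_sum_tmul {ι : Type*} [Fintype ι] (l : ι → L) (a : ι → A) :
    gammaFull F A n L (∑ j, l j ⊗ₜ[F] a j) =
      ∑ f : Fin n → ι, (∏ i, l (f i)) ⊗ₜ[F] PiTensorProduct.tprod F (a ∘ f) := by
  classical
  simp only [gammaFull, map_sum, Algebra.TensorProduct.map_tmul, AlgHom.id_apply]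
  rw [Fintype.prod_sum]
  refine Finset.sum_congr rfl fun f _ => ?_
  rw [← prod_singleAlgHom, prod_tmul_prod]
  rfl

lemma gammaFull_mul (x y : L ⊗[F] A) :
    gammaFull F A n L (x * y) = gammaFull F A n L x * gammaFull F A n L y := by
  simp only [gammaFull, map_mul, Finset.prod_mul_distrib]

lemma gammaFull_one : gammaFull F A n L 1 = 1 := by
  simp only [gammaFull, map_one, Finset.prod_const_one]

lemma gammaFull_smul (c : L) (x : L ⊗[F] A) :
    gammaFull F A n L (c • x) = c ^ n • gammaFull F A n L x := by
  have map_smul (i : Fin n) : Algebra.TensorProduct.map (AlgHom.id F L)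
      (singleAlgHom (R := F) (A := fun _ : Fin n => A) i) (c • x) =
        c • Algebra.TensorProduct.map (AlgHom.id F L) (singleAlgHom i) x :=
    _root_.map_smul (Algebra.TensorProduct.map (AlgHom.id L L)
      (singleAlgHom (R := F) (A := fun _ : Fin n => A) i)) c x
  simp only [gammaFull, map_smul, Finset.prod_smul, Finset.prod_const, Finset.card_univ,
    Fintype.card_fin]

lemma gammaFull_rTensor (f : L →ₐ[F] L') (x : L ⊗[F] A) :
    gammaFull F A n L' (f.toLinearMap.rTensor A x) =
      f.toLinearMap.rTensor _ (gammaFull F A n L x) := by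
  obtain ⟨m, l, a, rfl⟩ := TensorProduct.exists_sum_tmul_eq x
  simp only [map_sum, LinearMap.rTensor_tmul, gammaFull_sum_tmul, AlgHom.toLinearMap_apply,
    map_prod]

lemma gammaFull_lTensor {A' : Type*} [CommRing A'] [Algebra F A'] (g : A →ₗ[F] A')
    (x : L ⊗[F] A) :
    gammaFull F A' n L (g.lTensor L x) =
      (PiTensorProduct.map fun _ => g).lTensor L (gammaFull F A n L x) := by
  obtain ⟨m, l, a, rfl⟩ := TensorProduct.exists_sum_tmul_eq x
  simp only [map_sum, LinearMap.lTensor_tmul, gammaFull_sum_tmul, PiTensorProduct.map_tprod]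
  rfl

lemma lTensor_permHom_gammaFull (σ : Equiv.Perm (Fin n)) (x : L ⊗[F] A) :
    (permHom F A n σ).toLinearMap.lTensor L (gammaFull F A n L x) = gammaFull F A n L x := by
  obtain ⟨m, l, a, rfl⟩ := TensorProduct.exists_sum_tmul_eq x
  simp only [gammaFull_sum_tmul, map_sum, LinearMap.lTensor_tmul, AlgHom.toLinearMap_apply,
    permHom_tprod]
  refine Fintype.sum_equiv (σ.symm.arrowCongr (Equiv.refl _)) _ _ fun f => ?_
  congr 1
  exact (Equiv.prod_comp σ fun i => l (f i)).symm

lemma contract_gammaFull_mem (c : L →ₗ[F] F) (x : L ⊗[F] A) :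
    contract c (gammaFull F A n L x) ∈ TS F A n := fun σ =>
  (contract_lTensor c (permHom F A n σ).toLinearMap _).symm.trans
    (congrArg (contract c) (lTensor_permHom_gammaFull n σ x))

lemma gammaFull_mem_range (x : L ⊗[F] A) :
    gammaFull F A n L x ∈ LinearMap.range ((TS F A n).val.toLinearMap.lTensor L) := by
  obtain ⟨m, a, θ, rfl⟩ := exists_rTensor_generic_eq x
  have contract_mem (c : MvPolynomial (Fin m) F →ₗ[F] F) :
      contract c (gammaFull F A n _ (generic a)) ∈ LinearMap.range (TS F A n).val.toLinearMap :=
    ⟨⟨_, contract_gammaFull_mem n c (generic a)⟩, rfl⟩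
  obtain ⟨z, hz⟩ := mem_range_lTensor_of_contract_mem_range _ contract_mem
  refine ⟨θ.toLinearMap.rTensor _ z, ?_⟩
  rw [gammaFull_rTensor, ← hz]
  exact lTensor_rTensor_comm _ _ z

end GammaFull

section Kernel

variable {F : Type*} [CommRing F] {ι : Type*} {M : Type*} [AddCommGroup M] [Module F M]
  {A : Type*} [AddCommGroup A] [Module F A] {N : Type*} [AddCommGroup N] [Module F N]
  {π : M →ₗ[F] A}

lemma map_tensorPower_surjective (hπ : Function.Surjective π) :
    Function.Surjective (PiTensorProduct.map (R := F) fun _ : ι => π) := by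
  rw [← LinearMap.range_eq_top, map_range_eq_span_tprod, ← span_tprod_eq_top]
  congr 1
  exact (hπ.comp_left (α := ι)).range_comp (PiTensorProduct.tprod F)

variable [Finite ι]

lemma multilinear_eq_of_forall_eq (f : MultilinearMap F (fun _ : ι => M) N)
    (hf : ∀ m : ι → M, (∃ i, π (m i) = 0) → f m = 0) {m m' : ι → M}
    (h : ∀ i, π (m i) = π (m' i)) : f m = f m' := by
  classical
  cases nonempty_fintype ι
  rw [← sub_add_cancel m m', f.map_add_univ, Finset.sum_eq_single ∅]
  · rw [Finset.piecewise_empty]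
  · intro s _ hs
    obtain ⟨i, hi⟩ := Finset.nonempty_iff_ne_empty.mpr hs
    exact hf _ ⟨i, by simp [hi, h i]⟩
  · exact fun h => absurd (Finset.mem_univ _) h

lemma ker_map_le_span (hπ : Function.Surjective π) :
    LinearMap.ker (PiTensorProduct.map (R := F) fun _ : ι => π) ≤
      Submodule.span F (PiTensorProduct.tprod F '' {m : ι → M | ∃ i, π (m i) = 0}) := by
  set K := Submodule.span F (PiTensorProduct.tprod F '' {m : ι → M | ∃ i, π (m i) = 0})
  let f : MultilinearMap F (fun _ : ι => M) ((⨂[F] _ : ι, M) ⧸ K) :=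
    K.mkQ.compMultilinearMap (PiTensorProduct.tprod F)
  have f_eq {m m' : ι → M} (h : ∀ i, π (m i) = π (m' i)) : f m = f m' :=
    multilinear_eq_of_forall_eq f (fun m hm =>
      (Submodule.Quotient.mk_eq_zero K).mpr (Submodule.subset_span ⟨m, hm, rfl⟩)) h
  let s := Function.surjInv hπ
  have π_s (a : A) : π (s a) = a := Function.surjInv_eq hπ a
  let descended : MultilinearMap F (fun _ : ι => A) ((⨂[F] _ : ι, M) ⧸ K) :=
    { toFun := fun a => f (s ∘ a)
      map_update_add' := fun a i x y => by
        simp only [Function.comp_update]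
        rw [← f.map_update_add]
        refine f_eq fun j => ?_
        by_cases hj : j = i
        · subst hj; simp [π_s]
        · simp [hj]
      map_update_smul' := fun a i c x => by
        simp only [Function.comp_update]
        rw [← f.map_update_smul]
        refine f_eq fun j => ?_
        by_cases hj : j = i
        · subst hj; simp [π_s]
        · simp [hj] }
  have mkQ_eq : K.mkQ = PiTensorProduct.lift descended ∘ₗ PiTensorProduct.map fun _ => π := by
    ext m
    simp only [LinearMap.compMultilinearMap_apply, LinearMap.comp_apply, map_tprod, lift.tprod]
    exact f_eq fun i => (π_s _).symm
  rw [← K.ker_mkQ, mkQ_eq]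
  exact LinearMap.ker_le_ker_comp _ _

lemma exists_finset_forall_map_eq_zero (hπ : Function.Surjective π) {t : ⨂[F] _ : ι, M}
    (ht : PiTensorProduct.map (fun _ => π) t = 0) :
    ∃ S : Finset M, (∀ k ∈ S, π k = 0) ∧
      ∀ g : M →ₗ[F] N, (∀ k ∈ S, g k = 0) → PiTensorProduct.map (fun _ => g) t = 0 := by
  classical
  have mem_span := ker_map_le_span hπ (LinearMap.mem_ker.mpr ht)
  clear ht
  induction mem_span using Submodule.span_induction with
  | mem t ht =>
    obtain ⟨m, ⟨i, hi⟩, rfl⟩ := ht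
    refine ⟨{m i}, by simpa using hi, fun g hg => ?_⟩
    rw [map_tprod]
    exact MultilinearMap.map_coord_zero _ i (hg _ (Finset.mem_singleton_self _))
  | zero => exact ⟨∅, by simp, fun _ _ => map_zero _⟩
  | add t t' _ _ h h' =>
    obtain ⟨S, hS, kill⟩ := h
    obtain ⟨S', hS', kill'⟩ := h'
    refine ⟨S ∪ S', fun k hk => (Finset.mem_union.mp hk).elim (hS k) (hS' k), fun g hg => ?_⟩
    rw [map_add, kill g fun k hk => hg k (Finset.mem_union_left _ hk),
      kill' g fun k hk => hg k (Finset.mem_union_right _ hk), add_zero]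
  | smul c t _ h =>
    obtain ⟨S, hS, kill⟩ := h
    exact ⟨S, hS, fun g hg => by rw [map_smul, kill g hg, smul_zero]⟩

lemma exists_finset_forall_lTensor_map_eq_zero {L : Type*} [AddCommGroup L] [Module F L]
    (hπ : Function.Surjective π) {t : L ⊗[F] (⨂[F] _ : ι, M)}
    (ht : (PiTensorProduct.map fun _ => π).lTensor L t = 0) :
    ∃ S : Finset M, (∀ k ∈ S, π k = 0) ∧
      ∀ g : M →ₗ[F] N, (∀ k ∈ S, g k = 0) →
        (PiTensorProduct.map fun _ => g).lTensor L t = 0 := by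
  classical
  obtain ⟨t, rfl⟩ := (lTensor_exact L (LinearMap.exact_subtype_ker_map
    (PiTensorProduct.map fun _ : ι => π)) (map_tensorPower_surjective hπ) t).mp ht
  clear ht
  induction t with
  | zero => exact ⟨∅, by simp, fun _ _ => by simp only [map_zero]⟩
  | tmul l t =>
    obtain ⟨S, hS, kill⟩ := exists_finset_forall_map_eq_zero (N := N) hπ t.2
    exact ⟨S, hS, fun g hg => by
      rw [LinearMap.lTensor_tmul, LinearMap.lTensor_tmul, Submodule.subtype_apply, kill g hg,
        TensorProduct.tmul_zero]⟩
  | add t t' h h' =>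
    obtain ⟨S, hS, kill⟩ := h
    obtain ⟨S', hS', kill'⟩ := h'
    refine ⟨S ∪ S', fun k hk => (Finset.mem_union.mp hk).elim (hS k) (hS' k), fun g hg => ?_⟩
    rw [map_add, map_add, kill g fun k hk => hg k (Finset.mem_union_left _ hk),
      kill' g fun k hk => hg k (Finset.mem_union_right _ hk), add_zero]

end Kernel

section Flat

variable {F : Type*} [CommRing F] {M : Type*} [AddCommGroup M] [Module F M] [Module.Free F M]
  {A : Type*} [AddCommGroup A] [Module F A] [Module.Flat F A] {π : M →ₗ[F] A}

lemma exists_comp_eq_apply_eq_zero (hπ : Function.Surjective π) {k : M} (hk : π k = 0) :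
    ∃ g : M →ₗ[F] M, π ∘ₗ g = π ∧ g k = 0 := by
  classical
  let b := Module.Free.chooseBasis F M
  let s : Set (Module.Free.ChooseBasisIndex F M) := (b.repr k).support
  let res : M →ₗ[F] s →₀ F := Finsupp.lsubtypeDomain s ∘ₗ b.repr.toLinearMap
  let incl : (s →₀ F) →ₗ[F] M := Finsupp.linearCombination F fun i => b i
  have incl_res : incl (res k) = k := by
    conv_rhs => rw [← b.linearCombination_repr k, Finsupp.linearCombination_apply]
    exact Finsupp.sum_subtypeDomain_index (h := fun i r => r • b i) fun _ hi => hi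
  obtain ⟨m, a, y, hya, hak⟩ := Module.Flat.exists_factorization_of_apply_eq_zero_of_free
    (f := res k) (x := π ∘ₗ incl) (by rw [LinearMap.comp_apply, incl_res, hk])
  obtain ⟨y', hy'⟩ := Module.projective_lifting_property π y hπ
  refine ⟨LinearMap.id + (y' ∘ₗ a - incl) ∘ₗ res, ?_, ?_⟩
  · ext x
    have hya_x := LinearMap.congr_fun hya (res x)
    rw [← hy'] at hya_x
    simpa [sub_eq_zero] using hya_x.symm
  · simp [hak, incl_res]

lemma exists_comp_eq_forall_apply_eq_zero (hπ : Function.Surjective π) (S : Finset M)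
    (hS : ∀ k ∈ S, π k = 0) : ∃ g : M →ₗ[F] M, π ∘ₗ g = π ∧ ∀ k ∈ S, g k = 0 := by
  classical
  induction S using Finset.induction_on with
  | empty => exact ⟨LinearMap.id, LinearMap.comp_id π, by simp⟩
  | insert k S _ ih =>
    obtain ⟨g, hg, kill⟩ := ih fun k hk => hS k (Finset.mem_insert_of_mem hk)
    obtain ⟨h, hh, hk⟩ := exists_comp_eq_apply_eq_zero hπ (k := g k)
      (by rw [← LinearMap.comp_apply, hg, hS k (Finset.mem_insert_self k S)])
    refine ⟨h ∘ₗ g, by rw [← LinearMap.comp_assoc, hh, hg], fun k' hk' => ?_⟩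
    rcases Finset.mem_insert.mp hk' with rfl | hk'
    · exact hk
    · rw [LinearMap.comp_apply, kill k' hk', map_zero]

end Flat

section Content

variable {ι I : Type*} [Fintype ι]

/-- The content of a tuple `f` of elements of `I`: the number of times each element occurs, as
an exponent. The tuples with the same content are the permutations of one another. -/
noncomputable def content (f : ι → I) : I →₀ ℕ := ∑ i, Finsupp.single (f i) 1

lemma content_apply [DecidableEq I] (f : ι → I) (a : I) :
    content f a = Fintype.card {i // f i = a} := by
  simp only [content, Finsupp.finsetSum_apply, Finsupp.single_apply, Finset.sum_boole,
    Fintype.card_subtype, Nat.cast_id]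

lemma content_comp_perm (f : ι → I) (σ : Equiv.Perm ι) : content (f ∘ σ) = content f :=
  Equiv.sum_comp σ fun i => Finsupp.single (f i) 1

lemma exists_perm_of_content_eq {f f' : ι → I} (h : content f = content f') :
    ∃ σ : Equiv.Perm ι, f' = f ∘ σ := by
  classical
  have fiber_equiv (a : I) : Nonempty ({i // f' i = a} ≃ {i // f i = a}) :=
    ⟨Fintype.equivOfCardEq ((content_apply f' a).symm.trans (h ▸ content_apply f a))⟩
  let e (a : I) := (fiber_equiv a).some
  refine ⟨(Equiv.sigmaFiberEquiv f').symm.trans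
    ((Equiv.sigmaCongrRight e).trans (Equiv.sigmaFiberEquiv f)), funext fun i => ?_⟩
  exact ((e (f' i)) ⟨i, rfl⟩).2.symm

lemma finite_content_fiber (d : I →₀ ℕ) : {f : ι → I | content f = d}.Finite := by
  classical
  rcases Set.eq_empty_or_nonempty {f : ι → I | content f = d} with h | ⟨f, rfl⟩
  · exact h ▸ Set.finite_empty
  · refine (Set.finite_range fun σ : Equiv.Perm ι => f ∘ σ).subset fun f' hf' => ?_
    obtain ⟨σ, rfl⟩ := exists_perm_of_content_eq (f := f) hf'.symm
    exact ⟨σ, rfl⟩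

lemma prod_X_eq_monomial_content {R : Type*} [CommRing R] (f : ι → I) :
    ∏ i, (MvPolynomial.X (f i) : MvPolynomial I R) = MvPolynomial.monomial (content f) 1 :=
  (MvPolynomial.monomial_sum_one _ _).symm

lemma exists_content_eq {n : ℕ} (d : I →₀ ℕ) (hd : d.degree = n) :
    ∃ f : Fin n → I, content f = d := by
  induction n generalizing d with
  | zero => exact ⟨Fin.elim0, by simp [content, (Finsupp.degree_eq_zero_iff d).mp hd]⟩
  | succ n ih =>
    have d_ne_zero : d ≠ 0 := by
      rintro rfl
      simp at hd
    obtain ⟨a, ha⟩ := Finsupp.ne_iff.mp d_ne_zero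
    obtain ⟨d, rfl⟩ := le_iff_exists_add.mp
      (Finsupp.single_le_iff.mpr (Nat.one_le_iff_ne_zero.mpr ha))
    rw [map_add, Finsupp.degree_single, add_comm, Nat.add_right_cancel_iff] at hd
    obtain ⟨f, rfl⟩ := ih d hd
    exact ⟨Fin.cons a f, by simp [content, Fin.sum_univ_succ]⟩

end Content

section Retraction

variable {F : Type*} [CommRing F]

lemma exists_retraction_factorsThrough {X Y : Type*} (e : X → Y)
    (he : ∀ y, {x | e x = y}.Finite) :
    ∃ r : (X →₀ F) →ₗ[F] (X →₀ F), ∀ v : X →₀ F,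
      Function.FactorsThrough (r v) e ∧ (Function.FactorsThrough v e → r v = v) := by
  let rep (x : X) : X := Set.rangeSplitting e (Set.rangeFactorization e x)
  have e_rep (x : X) : e (rep x) = e x := Set.apply_rangeSplitting e _
  have finite_support (v : X →₀ F) : (Function.support (v ∘ rep)).Finite := by
    refine (v.hasFiniteSupport.biUnion fun y _ => he (e y)).subset fun x hx => ?_
    exact Set.mem_biUnion (x := rep x) hx (e_rep x).symm
  let r : (X →₀ F) →ₗ[F] (X →₀ F) :=
    { toFun := fun v => Finsupp.ofSupportFinite (v ∘ rep) (finite_support v)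
      map_add' := fun _ _ => Finsupp.ext fun _ => rfl
      map_smul' := fun _ _ => Finsupp.ext fun _ => rfl }
  refine ⟨r, fun v => ⟨fun x y hxy => ?_, fun hv => Finsupp.ext fun x => hv (e_rep x)⟩⟩
  have rep_eq : rep x = rep y := congrArg (Set.rangeSplitting e) (Subtype.ext hxy)
  exact congrArg v rep_eq

end Retraction

section Symmetric

variable {F : Type*} [CommRing F] {M : Type*} [CommRing M] [Algebra F M] (n : ℕ)
  {I : Type*} (b : Module.Basis I F M)

lemma repr_permHom (σ : Equiv.Perm (Fin n)) (t : ⨂[F] _ : Fin n, M) (f : Fin n → I) :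
    (Basis.piTensorProduct fun _ => b).repr (permHom F M n σ t) (f ∘ σ) =
      (Basis.piTensorProduct fun _ => b).repr t f := by
  classical
  refine LinearMap.congr_fun (f := Finsupp.lapply (f ∘ σ) ∘ₗ
    (Basis.piTensorProduct fun _ => b).repr.toLinearMap ∘ₗ (permHom F M n σ).toLinearMap)
    (g := Finsupp.lapply f ∘ₗ (Basis.piTensorProduct fun _ => b).repr.toLinearMap) ?_ t
  ext m
  simp only [LinearMap.compMultilinearMap_apply, LinearMap.comp_apply, AlgHom.toLinearMap_apply,
    permHom_tprod, Finsupp.lapply_apply, LinearEquiv.coe_coe,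
    Basis.piTensorProduct_repr_tprod_apply]
  exact Equiv.prod_comp σ fun i => b.repr (m i) (f i)

lemma mem_TS_iff_factorsThrough {t : ⨂[F] _ : Fin n, M} :
    t ∈ TS F M n ↔
      Function.FactorsThrough ((Basis.piTensorProduct fun _ => b).repr t) content := by
  constructor
  · intro ht f f' hff'
    obtain ⟨σ, rfl⟩ := exists_perm_of_content_eq hff'
    rw [← repr_permHom n b σ t f, ht σ]
  · intro ht σ
    refine (Basis.piTensorProduct fun _ => b).repr.injective (Finsupp.ext fun f => ?_)
    obtain ⟨f, rfl⟩ := (σ.arrowCongr (Equiv.refl I)).symm.surjective f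
    exact (repr_permHom n b σ t f).trans (ht (content_comp_perm f σ).symm)

lemma exists_retraction_TS [Module.Free F M] :
    ∃ r : (⨂[F] _ : Fin n, M) →ₗ[F] TS F M n, r ∘ₗ (TS F M n).val.toLinearMap = LinearMap.id := by
  let b := Module.Free.chooseBasis F M
  let tb := Basis.piTensorProduct fun _ : Fin n => b
  obtain ⟨r, hr⟩ := exists_retraction_factorsThrough (F := F)
    (content : (Fin n → Module.Free.ChooseBasisIndex F M) → _) finite_content_fiber
  let s : (⨂[F] _ : Fin n, M) →ₗ[F] (⨂[F] _ : Fin n, M) :=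
    tb.repr.symm.toLinearMap ∘ₗ r ∘ₗ tb.repr.toLinearMap
  have s_mem (t) : s t ∈ (TS F M n).toSubmodule := by
    refine (mem_TS_iff_factorsThrough n b).mpr ?_
    simpa [s, tb] using (hr (tb.repr t)).1
  refine ⟨s.codRestrict _ s_mem, LinearMap.ext fun t => Subtype.ext ?_⟩
  have r_repr := (hr (tb.repr t)).2 ((mem_TS_iff_factorsThrough n b).mp t.2)
  exact (congrArg tb.repr.symm r_repr).trans (tb.repr.symm_apply_apply _)

end Symmetric

section TSMap

variable {F : Type*} [CommRing F] {M : Type*} [CommRing M] [Algebra F M]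
  {A : Type*} [CommRing A] [Algebra F A] (n : ℕ)

lemma permHom_map (g : M →ₗ[F] A) (σ : Equiv.Perm (Fin n)) (t : ⨂[F] _ : Fin n, M) :
    permHom F A n σ (PiTensorProduct.map (fun _ => g) t) =
      PiTensorProduct.map (fun _ => g) (permHom F M n σ t) := by
  refine LinearMap.congr_fun (f := (permHom F A n σ).toLinearMap ∘ₗ PiTensorProduct.map fun _ => g)
    (g := (PiTensorProduct.map fun _ => g) ∘ₗ (permHom F M n σ).toLinearMap) ?_ t
  ext m
  simp only [LinearMap.compMultilinearMap_apply, LinearMap.comp_apply, AlgHom.toLinearMap_apply,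
    permHom_tprod, map_tprod]

lemma map_mem_TS (g : M →ₗ[F] A) {t : ⨂[F] _ : Fin n, M} (ht : t ∈ TS F M n) :
    PiTensorProduct.map (fun _ => g) t ∈ TS F A n := fun σ => by
  rw [permHom_map, ht σ]

/-- The linear map `TS^n(M) → TS^n(A)` induced on symmetric tensors by a linear map `M → A`. It
is linear in `F` only: `g` need not be multiplicative. -/
noncomputable def TSMap (g : M →ₗ[F] A) : TS F M n →ₗ[F] TS F A n :=
  (PiTensorProduct.map fun _ => g).restrict (p := (TS F M n).toSubmodule)
    (q := (TS F A n).toSubmodule) fun _ ht => map_mem_TS n g ht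

lemma coe_TSMap (g : M →ₗ[F] A) (t : TS F M n) :
    (TSMap n g t : ⨂[F] _ : Fin n, A) = PiTensorProduct.map (fun _ => g) (t : ⨂[F] _, M) :=
  rfl

lemma val_comp_TSMap (g : M →ₗ[F] A) :
    (TS F A n).val.toLinearMap ∘ₗ TSMap n g =
      (PiTensorProduct.map fun _ => g) ∘ₗ (TS F M n).val.toLinearMap :=
  rfl

lemma TSMap_comp_of_comp_eq {π : M →ₗ[F] A} {g : M →ₗ[F] M} (h : π ∘ₗ g = π) :
    TSMap n π ∘ₗ TSMap n g = TSMap n π := by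
  refine LinearMap.ext fun t => Subtype.ext ?_
  rw [LinearMap.comp_apply, coe_TSMap, coe_TSMap, coe_TSMap, ← LinearMap.comp_apply,
    ← PiTensorProduct.map_comp, h]

variable [Module.Free F M] [Module.Flat F A] {π : M →ₗ[F] A}

lemma TSMap_surjective (hπ : Function.Surjective π) : Function.Surjective (TSMap n π) := by
  classical
  intro z
  obtain ⟨t, ht⟩ := map_tensorPower_surjective hπ (z : ⨂[F] _ : Fin n, A)
  have map_perm_sub (σ : Equiv.Perm (Fin n)) :
      PiTensorProduct.map (fun _ => π) (permHom F M n σ t - t) = 0 := by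
    rw [map_sub, ← permHom_map, ht, z.2 σ, sub_self]
  choose S hS kill using fun σ => exists_finset_forall_map_eq_zero (N := M) hπ (map_perm_sub σ)
  obtain ⟨g, hg, hgS⟩ := exists_comp_eq_forall_apply_eq_zero hπ (Finset.univ.biUnion S)
    fun k hk => by
      obtain ⟨σ, -, hσ⟩ := Finset.mem_biUnion.mp hk
      exact hS σ k hσ
  have map_mem : PiTensorProduct.map (fun _ => g) t ∈ TS F M n := fun σ => by
    rw [permHom_map, ← sub_eq_zero, ← map_sub]
    exact kill σ g fun k hk => hgS k (Finset.mem_biUnion.mpr ⟨σ, Finset.mem_univ σ, hk⟩)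
  refine ⟨⟨_, map_mem⟩, Subtype.ext ?_⟩
  rw [coe_TSMap, ← LinearMap.comp_apply, ← PiTensorProduct.map_comp, hg, ht]

lemma lTensor_TSMap_eq_zero (hπ : Function.Surjective π) {L : Type*} [AddCommGroup L] [Module F L]
    {s : L ⊗[F] TS F M n}
    (hs : (TS F A n).val.toLinearMap.lTensor L ((TSMap n π).lTensor L s) = 0) :
    (TSMap n π).lTensor L s = 0 := by
  obtain ⟨r, hr⟩ := exists_retraction_TS (F := F) (M := M) n
  rw [← LinearMap.lTensor_comp_apply, val_comp_TSMap, LinearMap.lTensor_comp_apply] at hs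
  obtain ⟨S, hS, kill⟩ := exists_finset_forall_lTensor_map_eq_zero (N := M) hπ hs
  obtain ⟨g, hg, hgS⟩ := exists_comp_eq_forall_apply_eq_zero hπ S hS
  have TSMap_g : (TSMap n g).lTensor L s = 0 := by
    have retract : TSMap n g = r ∘ₗ (PiTensorProduct.map fun _ => g) ∘ₗ
        (TS F M n).val.toLinearMap := by
      rw [← val_comp_TSMap, ← LinearMap.comp_assoc, hr, LinearMap.id_comp]
    rw [retract, LinearMap.lTensor_comp_apply, LinearMap.lTensor_comp_apply, kill g hgS, map_zero]
  rw [← TSMap_comp_of_comp_eq n hg, LinearMap.lTensor_comp_apply, TSMap_g, map_zero]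

end TSMap

section Flat

variable {F : Type*} [CommRing F] {A : Type*} [CommRing A] [Algebra F A]

lemma aeval_id_surjective :
    Function.Surjective (MvPolynomial.aeval (R := F) (id : A → A)).toLinearMap :=
  fun a => ⟨MvPolynomial.X a, MvPolynomial.aeval_X _ _⟩

lemma lTensor_TS_val_injective (n : ℕ) [Module.Flat F A] (L : Type*) [AddCommGroup L]
    [Module F L] : Function.Injective ((TS F A n).val.toLinearMap.lTensor L) := by
  refine (injective_iff_map_eq_zero _).mpr fun u hu => ?_
  obtain ⟨s, rfl⟩ :=
    LinearMap.lTensor_surjective L (TSMap_surjective n (aeval_id_surjective (F := F) (A := A))) u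
  exact lTensor_TSMap_eq_zero n aeval_id_surjective hu

end Flat

section CompGamma

variable {F : Type u} [CommRing F] {A : Type v} [CommRing A] [Algebra F A] {n : ℕ}
  {γ : ∀ (L : Type u) [CommRing L] [Algebra F L], L ⊗[F] A → L ⊗[F] ↥(TS F A n)}
  {B : Type w} [CommRing B] [Algebra F B] (ρ : TS F A n →ₐ[F] B)

lemma compGamma_isPolyLaw (hγ : IsPolyLaw F A (TS F A n) γ) :
    IsPolyLaw F A B (compGamma F A n γ B ρ) := by
  intro L L' _ _ _ _ f x
  rw [compGamma, hγ]
  exact lTensor_rTensor_comm ρ.toLinearMap f.toLinearMap (γ L x)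

lemma compGamma_isMultiplicativeLaw (hγ : IsMultiplicativeLaw F A (TS F A n) γ) :
    IsMultiplicativeLaw F A B (compGamma F A n γ B ρ) := by
  refine fun L _ _ => ⟨fun x y => ?_, ?_⟩
  · rw [compGamma, (hγ L).1, map_mul]
    rfl
  · rw [compGamma, (hγ L).2, map_one]

lemma compGamma_isHomogeneousLaw {m : ℕ} (hγ : IsHomogeneousLaw F A (TS F A n) m γ) :
    IsHomogeneousLaw F A B m (compGamma F A n γ B ρ) := by
  intro L _ _ c x
  rw [compGamma, hγ]
  exact (ρ.toLinearMap.baseChange L).map_smul (c ^ m) (γ L x)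

end CompGamma

section Gamma

variable {F : Type u} [CommRing F] {A : Type v} [CommRing A] [Algebra F A] (n : ℕ)

/-- The law `γ_n : A → TS^n(A)`, a lift of `gammaFull` along `L ⊗ TS^n(A) → L ⊗ A^{⊗n}`. The lift
is unique when `A` is flat. -/
noncomputable def gamma (L : Type u) [CommRing L] [Algebra F L] (x : L ⊗[F] A) :
    L ⊗[F] TS F A n :=
  (gammaFull_mem_range n x).choose

variable {L : Type u} [CommRing L] [Algebra F L]

lemma lTensor_val_gamma (x : L ⊗[F] A) :
    (TS F A n).val.toLinearMap.lTensor L (gamma n L x) = gammaFull F A n L x :=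
  (gammaFull_mem_range n x).choose_spec

lemma coe_contract_gamma (c : L →ₗ[F] F) (x : L ⊗[F] A) :
    ((contract c (gamma n L x) : TS F A n) : ⨂[F] _ : Fin n, A) =
      contract c (gammaFull F A n L x) := by
  rw [← lTensor_val_gamma, contract_lTensor]
  rfl

variable [Module.Flat F A]

lemma gamma_isPolyLaw : IsPolyLaw F A (TS F A n) (gamma n) := by
  intro L L' _ _ _ _ f x
  apply lTensor_TS_val_injective n L'
  have comm := lTensor_rTensor_comm (TS F A n).val.toLinearMap f.toLinearMap (gamma n L x)
  rw [comm, lTensor_val_gamma, lTensor_val_gamma, gammaFull_rTensor]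

lemma gamma_isMultiplicativeLaw : IsMultiplicativeLaw F A (TS F A n) (gamma n) := by
  intro L _ _
  let incl := Algebra.TensorProduct.map (AlgHom.id F L) (TS F A n).val
  have incl_gamma (x : L ⊗[F] A) : incl (gamma n L x) = gammaFull F A n L x :=
    lTensor_val_gamma n x
  have incl_injective : Function.Injective incl := lTensor_TS_val_injective n L
  refine ⟨fun x y => incl_injective ?_, incl_injective ?_⟩
  · rw [map_mul, incl_gamma, incl_gamma, incl_gamma, gammaFull_mul]
  · rw [map_one, incl_gamma, gammaFull_one]

lemma gamma_isHomogeneousLaw : IsHomogeneousLaw F A (TS F A n) n (gamma n) := by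
  intro L _ _ c x
  let incl := (TS F A n).val.toLinearMap.baseChange L
  have incl_gamma (x : L ⊗[F] A) : incl (gamma n L x) = gammaFull F A n L x :=
    lTensor_val_gamma n x
  have incl_injective : Function.Injective incl := lTensor_TS_val_injective n L
  apply incl_injective
  rw [map_smul, incl_gamma, incl_gamma, gammaFull_smul]

end Gamma

section Contractions

variable {F : Type u} [CommRing F] {M : Type v} [CommRing M] [Algebra F M] (n : ℕ)

lemma exists_linearMap_prod_X_eq {m : ℕ} {v : (Fin n → Fin m) → F}
    (hv : Function.FactorsThrough v content) :
    ∃ c : MvPolynomial (Fin m) F →ₗ[F] F, ∀ f : Fin n → Fin m,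
      c (∏ i, MvPolynomial.X (f i)) = v f := by
  refine ⟨(MvPolynomial.basisMonomials (Fin m) F).constr F (Function.extend content v 0),
    fun f => ?_⟩
  rw [prod_X_eq_monomial_content, ← hv.extend_apply 0 f]
  exact (MvPolynomial.basisMonomials (Fin m) F).constr_basis F _ _

lemma sum_repr_smul_tprod {I J : Type*} [Fintype J] (b : Module.Basis I F M) {a : J → I}
    (ha : Function.Injective a) (t : ⨂[F] _ : Fin n, M)
    (ht : ∀ f ∈ ((Basis.piTensorProduct fun _ => b).repr t).support, ∃ f' : Fin n → J, a ∘ f' = f) :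
    ∑ f : Fin n → J, (Basis.piTensorProduct fun _ => b).repr t (a ∘ f) •
      PiTensorProduct.tprod F (b ∘ a ∘ f) = t := by
  classical
  let tb := Basis.piTensorProduct fun _ : Fin n => b
  let comp_a : (Fin n → J) ↪ (Fin n → I) := ⟨fun f => a ∘ f, ha.comp_left⟩
  have tb_apply (f : Fin n → I) : tb f = PiTensorProduct.tprod F (b ∘ f) :=
    Basis.piTensorProduct_apply _ _
  calc ∑ f : Fin n → J, tb.repr t (a ∘ f) • PiTensorProduct.tprod F (b ∘ a ∘ f)
      = ∑ f ∈ Finset.univ.map comp_a, tb.repr t f • tb f := by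
        simp only [Finset.sum_map, tb_apply]; rfl
    _ = Finsupp.linearCombination F tb (tb.repr t) :=
        (Finsupp.linearCombination_apply_of_mem_supported F fun f hf => by
          obtain ⟨f', rfl⟩ := ht f hf
          exact Finset.mem_map_of_mem comp_a (Finset.mem_univ f')).symm
    _ = t := tb.linearCombination_repr t

lemma exists_contract_gammaFull_eq_of_free [Module.Free F M] {t : ⨂[F] _ : Fin n, M}
    (ht : t ∈ TS F M n) :
    ∃ (m : ℕ) (c : MvPolynomial (Fin m) F →ₗ[F] F) (x : MvPolynomial (Fin m) F ⊗[F] M),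
      contract c (gammaFull F M n _ x) = t := by
  classical
  let b := Module.Free.chooseBasis F M
  let tb := Basis.piTensorProduct fun _ : Fin n => b
  let s := (tb.repr t).support.biUnion fun f => Finset.univ.image f
  let a (j : Fin s.card) := (s.equivFin.symm j : Module.Free.ChooseBasisIndex F M)
  have a_injective : Function.Injective a :=
    Subtype.val_injective.comp s.equivFin.symm.injective
  have factor (f) (hf : f ∈ (tb.repr t).support) : ∃ f' : Fin n → Fin s.card, a ∘ f' = f := by
    have mem_s (i : Fin n) : f i ∈ s :=
      Finset.mem_biUnion.mpr ⟨f, hf, Finset.mem_image_of_mem f (Finset.mem_univ i)⟩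
    exact ⟨fun i => s.equivFin ⟨f i, mem_s i⟩, funext fun i => by simp [a]⟩
  obtain ⟨c, hc⟩ := exists_linearMap_prod_X_eq n (v := fun f => tb.repr t (a ∘ f))
    fun f f' hff' => by
      obtain ⟨σ, rfl⟩ := exists_perm_of_content_eq hff'
      exact (mem_TS_iff_factorsThrough n b).mp ht (content_comp_perm (a ∘ f) σ).symm
  refine ⟨s.card, c, generic (b ∘ a), ?_⟩
  rw [generic, gammaFull_sum_tmul, map_sum]
  simp only [contract_tmul, hc]
  exact sum_repr_smul_tprod n b a_injective t factor

lemma exists_contract_gamma_eq {A : Type v} [CommRing A] [Algebra F A] [Module.Flat F A]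
    (z : TS F A n) :
    ∃ (m : ℕ) (c : MvPolynomial (Fin m) F →ₗ[F] F) (x : MvPolynomial (Fin m) F ⊗[F] A),
      contract c (gamma n _ x) = z := by
  obtain ⟨t, rfl⟩ := TSMap_surjective n (aeval_id_surjective (F := F)) z
  obtain ⟨m, c, x, hx⟩ := exists_contract_gammaFull_eq_of_free n t.2
  refine ⟨m, c, (MvPolynomial.aeval (R := F) (id : A → A)).toLinearMap.lTensor _ x,
    Subtype.ext ?_⟩
  rw [coe_contract_gamma, gammaFull_lTensor, contract_lTensor, hx, coe_TSMap]

end Contractions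

section Homogeneous

variable {F : Type u} [CommRing F]

/-- The substitution `Xᵢ ↦ Xᵢ T`, which separates the homogeneous components of a polynomial as
the coefficients of the powers of `T`. -/
noncomputable def scaleVars (σ : Type*) :
    MvPolynomial σ F →ₐ[F] Polynomial (MvPolynomial σ F) :=
  MvPolynomial.aeval fun i => Polynomial.C (MvPolynomial.X i) * Polynomial.X

lemma coeff_scaleVars {σ : Type*} (n : ℕ) (p : MvPolynomial σ F) :
    (scaleVars σ p).coeff n = MvPolynomial.homogeneousComponent n p := by
  classical
  induction p using MvPolynomial.induction_on' with
  | add p q hp hq => simp only [map_add, Polynomial.coeff_add, hp, hq]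
  | monomial d r =>
    have scale_monomial : scaleVars σ (MvPolynomial.monomial d r) =
        Polynomial.monomial d.degree (MvPolynomial.monomial d r) := by
      rw [scaleVars, MvPolynomial.aeval_monomial, MvPolynomial.monomial_eq,
        ← Polynomial.C_mul_X_pow_eq_monomial, Finsupp.degree]
      simp only [Finsupp.prod, mul_pow, Finset.prod_mul_distrib, Finset.prod_pow_eq_pow_sum,
        map_mul, map_prod, map_pow, mul_assoc]
      rfl
    rw [scale_monomial, Polynomial.coeff_monomial,
      MvPolynomial.homogeneousComponent_of_mem (MvPolynomial.isHomogeneous_monomial r rfl)]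
    exact if_congr eq_comm rfl rfl

variable {M : Type v} [AddCommGroup M] [Module F M] {N : Type w} [AddCommGroup N] [Module F N]
  {n : ℕ} {φ : ∀ (L : Type u) [CommRing L] [Algebra F L], L ⊗[F] M → L ⊗[F] N}

lemma rTensor_homogeneousComponent_generic (hφ : IsPolyLaw F M N φ)
    (hφ' : IsHomogeneousLaw F M N n φ) {m : ℕ} (a : Fin m → M) :
    (MvPolynomial.homogeneousComponent n).rTensor N (φ _ (generic a)) = φ _ (generic a) := by
  let R := MvPolynomial (Fin m) F
  let ι : R →ₐ[F] Polynomial R := Polynomial.CAlgHom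
  let coeff : Polynomial R →ₗ[F] R := (Polynomial.lcoeff R n).restrictScalars F
  have scale_generic : (scaleVars (Fin m)).toLinearMap.rTensor M (generic a) =
      (Polynomial.X : Polynomial R) • ι.toLinearMap.rTensor M (generic a) := by
    rw [scaleVars, rTensor_aeval_generic]
    simp [generic, Finset.smul_sum, TensorProduct.smul_tmul', ι]
  have coeff_smul (z : R ⊗[F] N) :
      coeff.rTensor N ((Polynomial.X ^ n : Polynomial R) • ι.toLinearMap.rTensor N z) = z := by
    induction z with
    | zero => simp
    | add z z' h h' => simp only [map_add, smul_add, h, h']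
    | tmul r y => simp [TensorProduct.smul_tmul', coeff, ι]
  have coeff_comp : coeff ∘ₗ (scaleVars (Fin m)).toLinearMap =
      MvPolynomial.homogeneousComponent n := LinearMap.ext (coeff_scaleVars n)
  calc (MvPolynomial.homogeneousComponent n).rTensor N (φ R (generic a))
      = coeff.rTensor N ((scaleVars (Fin m)).toLinearMap.rTensor N (φ R (generic a))) := by
        rw [← LinearMap.rTensor_comp_apply, coeff_comp]
    _ = coeff.rTensor N ((Polynomial.X ^ n : Polynomial R) •
          ι.toLinearMap.rTensor N (φ R (generic a))) := by
        rw [← hφ, scale_generic, hφ', hφ]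
    _ = φ R (generic a) := coeff_smul _

lemma comp_homogeneousComponent_eq_zero {m : ℕ} {c : MvPolynomial (Fin m) F →ₗ[F] F}
    (hc : ∀ f : Fin n → Fin m, c (∏ i, MvPolynomial.X (f i)) = 0) :
    c ∘ₗ MvPolynomial.homogeneousComponent n = 0 := by
  refine LinearMap.ext fun p => ?_
  rw [LinearMap.comp_apply, MvPolynomial.homogeneousComponent_apply, map_sum]
  refine Finset.sum_eq_zero fun d hd => ?_
  obtain ⟨f, rfl⟩ := exists_content_eq d (Finset.mem_filter.mp hd).2
  rw [← mul_one (MvPolynomial.coeff _ p), ← smul_eq_mul, ← MvPolynomial.smul_monomial, map_smul,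
    ← prod_X_eq_monomial_content, hc, smul_zero]

lemma contract_law_sum_tmul_eq_zero (hφ : IsPolyLaw F M N φ) (hφ' : IsHomogeneousLaw F M N n φ)
    {L : Type u} [CommRing L] [Algebra F L] {c : L →ₗ[F] F} {m : ℕ} {l : Fin m → L}
    (hc : ∀ f : Fin n → Fin m, c (∏ i, l (f i)) = 0) (a : Fin m → M) :
    contract c (φ L (∑ j, l j ⊗ₜ[F] a j)) = 0 := by
  let θ : MvPolynomial (Fin m) F →ₐ[F] L := MvPolynomial.aeval l
  have comp_eq_zero : (c ∘ₗ θ.toLinearMap) ∘ₗ MvPolynomial.homogeneousComponent n = 0 :=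
    comp_homogeneousComponent_eq_zero fun f => by simpa [θ] using hc f
  rw [← rTensor_aeval_generic, hφ, contract_rTensor,
    ← rTensor_homogeneousComponent_generic hφ hφ', contract_rTensor, comp_eq_zero]
  simp [contract]

end Homogeneous

section Relations

variable {F : Type u} [CommRing F]

lemma exists_sum_tmul_basis_eq {L M I : Type*} [AddCommGroup L] [Module F L] [AddCommGroup M]
    [Module F M] (b : Module.Basis I F M) (y : L ⊗[F] M) :
    ∃ (m : ℕ) (l : Fin m → L) (a : Fin m → I),
      Function.Injective a ∧ ∑ j, l j ⊗ₜ[F] b (a j) = y := by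
  classical
  let v := TensorProduct.equivFinsuppOfBasisRight b y
  let e := v.support.equivFin
  refine ⟨v.support.card, fun j => v (e.symm j), fun j => e.symm j,
    Subtype.val_injective.comp e.symm.injective, ?_⟩
  rw [e.symm.sum_comp fun i => v i ⊗ₜ[F] b i,
    Finset.sum_coe_sort v.support fun i => v i ⊗ₜ[F] b i]
  exact (TensorProduct.equivFinsuppOfBasisRight_symm_apply b v).symm.trans
    (LinearEquiv.symm_apply_apply _ y)

variable {L : Type u} [CommRing L] [Algebra F L] {n : ℕ}

lemma apply_prod_eq_zero_of_contract_gammaFull {M I : Type*} [CommRing M] [Algebra F M]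
    (b : Module.Basis I F M) {c : L →ₗ[F] F} {m : ℕ} {l : Fin m → L} {a : Fin m → I}
    (ha : Function.Injective a)
    (h : contract c (gammaFull F M n L (∑ j, l j ⊗ₜ[F] b (a j))) = 0) (f : Fin n → Fin m) :
    c (∏ i, l (f i)) = 0 := by
  classical
  let tb := Basis.piTensorProduct fun _ : Fin n => b
  have independent : LinearIndependent F fun f : Fin n → Fin m => tb (a ∘ f) :=
    tb.linearIndependent.comp _ ha.comp_left
  refine Fintype.linearIndependent_iff.mp independent (fun f => c (∏ i, l (f i))) ?_ f
  rw [gammaFull_sum_tmul, map_sum] at h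
  simpa only [contract_tmul, tb, Function.comp_def, Basis.piTensorProduct_apply] using h

variable {A : Type v} [CommRing A] [Algebra F A] [Module.Flat F A]
  {N : Type w} [AddCommGroup N] [Module F N]
  {φ : ∀ (L : Type u) [CommRing L] [Algebra F L], L ⊗[F] A → L ⊗[F] N}

lemma contract_law_eq_zero (hφ : IsPolyLaw F A N φ) (hφ' : IsHomogeneousLaw F A N n φ)
    {c : L →ₗ[F] F} {x : L ⊗[F] A} (hx : contract c (gammaFull F A n L x) = 0) :
    contract c (φ L x) = 0 := by
  let M := MvPolynomial A F
  let π : M →ₗ[F] A := (MvPolynomial.aeval id).toLinearMap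
  have hπ : Function.Surjective π := aeval_id_surjective
  obtain ⟨y, rfl⟩ := LinearMap.lTensor_surjective L hπ x
  rw [gammaFull_lTensor, contract_lTensor] at hx
  obtain ⟨S, hS, kill⟩ := exists_finset_forall_map_eq_zero (N := M) hπ hx
  obtain ⟨g, hg, hgS⟩ := exists_comp_eq_forall_apply_eq_zero hπ S hS
  have contract_g : contract c (gammaFull F M n L (g.lTensor L y)) = 0 := by
    rw [gammaFull_lTensor, contract_lTensor]
    exact kill g hgS
  let b := Module.Free.chooseBasis F M
  obtain ⟨m, l, a, ha, hla⟩ := exists_sum_tmul_basis_eq b (g.lTensor L y)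
  have hc := apply_prod_eq_zero_of_contract_gammaFull b ha (hla ▸ contract_g)
  rw [← hg, LinearMap.lTensor_comp_apply, ← hla, map_sum]
  exact contract_law_sum_tmul_eq_zero hφ hφ' hc fun j => π (b (a j))

end Relations

section ContractionGraph

variable {F : Type u} [CommRing F] {A : Type v} [AddCommGroup A] [Module F A]
  {N : Type*} [AddCommGroup N] [Module F N] {N' : Type*} [AddCommGroup N'] [Module F N']
  {φ : ∀ (L : Type u) [CommRing L] [Algebra F L], L ⊗[F] A → L ⊗[F] N}
  {ψ : ∀ (L : Type u) [CommRing L] [Algebra F L], L ⊗[F] A → L ⊗[F] N'}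

lemma exists_rTensor_fst_snd_eq {L : Type*} [CommRing L] [Algebra F L] {L' : Type*}
    [CommRing L'] [Algebra F L'] (x : L ⊗[F] A) (x' : L' ⊗[F] A) :
    ∃ y : (L × L') ⊗[F] A, (AlgHom.fst F L L').toLinearMap.rTensor A y = x ∧
      (AlgHom.snd F L L').toLinearMap.rTensor A y = x' := by
  have fst_eq : (AlgHom.fst F L L').toLinearMap = LinearMap.fst F L L' := rfl
  have snd_eq : (AlgHom.snd F L L').toLinearMap = LinearMap.snd F L L' := rfl
  refine ⟨(LinearMap.inl F L L').rTensor A x + (LinearMap.inr F L L').rTensor A x', ?_, ?_⟩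
  · rw [fst_eq, map_add, ← LinearMap.rTensor_comp_apply, ← LinearMap.rTensor_comp_apply]
    simp
  · rw [snd_eq, map_add, ← LinearMap.rTensor_comp_apply, ← LinearMap.rTensor_comp_apply]
    simp

/-- The pairs of corresponding contractions `(c(φ_L(x)), c(ψ_L(x)))` of two polynomial laws. When
it is the graph of a linear map, that map carries `φ` to `ψ`. -/
def contractionGraph (hφ : IsPolyLaw F A N φ) (hψ : IsPolyLaw F A N' ψ) :
    Submodule F (N × N') where
  carrier := {p | ∃ (L : Type u) (_ : CommRing L) (_ : Algebra F L) (c : L →ₗ[F] F)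
    (x : L ⊗[F] A), (contract c (φ L x), contract c (ψ L x)) = p}
  zero_mem' := ⟨F, inferInstance, inferInstance, 0, 0, by simp [contract]⟩
  add_mem' := by
    rintro _ _ ⟨L, _, _, c, x, rfl⟩ ⟨L', _, _, c', x', rfl⟩
    obtain ⟨y, rfl, rfl⟩ := exists_rTensor_fst_snd_eq x x'
    refine ⟨L × L', inferInstance, inferInstance,
      c ∘ₗ (AlgHom.fst F L L').toLinearMap + c' ∘ₗ (AlgHom.snd F L L').toLinearMap, y, ?_⟩
    rw [hφ, hφ, hψ, hψ]
    simp only [contract_add, contract_rTensor, Prod.mk_add_mk]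
  smul_mem' := by
    rintro r _ ⟨L, _, _, c, x, rfl⟩
    exact ⟨L, inferInstance, inferInstance, r • c, x, by simp only [contract_smul, Prod.smul_mk]⟩

lemma lTensor_law_eq (hφ : IsPolyLaw F A N φ) (hψ : IsPolyLaw F A N' ψ) {ρ : N →ₗ[F] N'}
    (hρ : ∀ (L : Type u) [CommRing L] [Algebra F L] (c : L →ₗ[F] F) (x : L ⊗[F] A),
      ρ (contract c (φ L x)) = contract c (ψ L x))
    {L : Type u} [CommRing L] [Algebra F L] (x : L ⊗[F] A) :
    ρ.lTensor L (φ L x) = ψ L x := by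
  obtain ⟨m, a, θ, rfl⟩ := exists_rTensor_generic_eq x
  rw [hφ, hψ, lTensor_rTensor_comm]
  congr 1
  refine eq_of_contract_eq fun c => ?_
  rw [contract_lTensor, hρ]

end ContractionGraph

section Representation

variable {F : Type u} [CommRing F] {A : Type v} [CommRing A] [Algebra F A] [Module.Flat F A]
  {n : ℕ}

lemma exists_linearMap_contract_gamma {N : Type w} [AddCommGroup N] [Module F N]
    {φ : ∀ (L : Type u) [CommRing L] [Algebra F L], L ⊗[F] A → L ⊗[F] N}
    (hφ : IsPolyLaw F A N φ) (hφ' : IsHomogeneousLaw F A N n φ) :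
    ∃ ρ : TS F A n →ₗ[F] N, ∀ (L : Type u) [CommRing L] [Algebra F L] (c : L →ₗ[F] F)
      (x : L ⊗[F] A), ρ (contract c (gamma n L x)) = contract c (φ L x) := by
  let G := contractionGraph (gamma_isPolyLaw n) hφ
  have fst_injective : Function.Injective (Prod.fst ∘ G.subtype) := by
    let fst : G →+ TS F A n := (AddMonoidHom.fst _ N).comp G.toAddSubgroup.subtype
    refine (injective_iff_map_eq_zero fst).mpr ?_
    rintro ⟨_, L, _, _, c, x, rfl⟩ (hx : contract c (gamma n L x) = 0)
    have contract_full : contract c (gammaFull F A n L x) = 0 := by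
      rw [← coe_contract_gamma, hx]
      rfl
    exact Subtype.ext (Prod.ext hx (contract_law_eq_zero hφ hφ' contract_full))
  have fst_surjective : Function.Surjective (Prod.fst ∘ G.subtype) := fun z => by
    obtain ⟨m, c, x, hx⟩ := exists_contract_gamma_eq n z
    exact ⟨⟨_, _, _, _, c, x, rfl⟩, hx⟩
  obtain ⟨ρ, hρ⟩ := Submodule.exists_eq_graph ⟨fst_injective, fst_surjective⟩
  refine ⟨ρ, fun L _ _ c x => ?_⟩
  have mem_graph : (contract c (gamma n L x), contract c (φ L x)) ∈ ρ.graph :=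
    hρ ▸ (⟨L, _, _, c, x, rfl⟩ : _ ∈ G)
  exact ((LinearMap.mem_graph_iff ρ _).mp mem_graph).symm

variable {B : Type w} [CommRing B] [Algebra F B]

lemma compGamma_gamma_injective : Function.Injective (compGamma F A n (gamma n) B) := by
  intro ρ ρ' h
  refine AlgHom.ext fun z => ?_
  obtain ⟨m, c, x, rfl⟩ := exists_contract_gamma_eq n z
  have law_eq : ρ.toLinearMap.lTensor _ (gamma n _ x) = ρ'.toLinearMap.lTensor _ (gamma n _ x) :=
    congrFun (congrFun (congrFun (congrFun h _) _) _) x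
  have contract_eq := congrArg (contract c) law_eq
  rwa [contract_lTensor, contract_lTensor] at contract_eq

variable {φ : ∀ (L : Type u) [CommRing L] [Algebra F L], L ⊗[F] A → L ⊗[F] B}

lemma map_one_of_contract_gamma (hφ : IsMultiplicativeLaw F A B φ) {ρ : TS F A n →ₗ[F] B}
    (hρ : ∀ (L : Type u) [CommRing L] [Algebra F L] (c : L →ₗ[F] F) (x : L ⊗[F] A),
      ρ (contract c (gamma n L x)) = contract c (φ L x)) : ρ 1 = 1 := by
  have h := hρ F LinearMap.id 1
  rw [(hφ F).2, (gamma_isMultiplicativeLaw n F).2] at h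
  simpa only [Algebra.TensorProduct.one_def, contract_tmul, LinearMap.id_apply, one_smul] using h

lemma map_mul_of_contract_gamma (hφ : IsPolyLaw F A B φ) (hφ' : IsMultiplicativeLaw F A B φ)
    {ρ : TS F A n →ₗ[F] B}
    (hρ : ∀ (L : Type u) [CommRing L] [Algebra F L] (c : L →ₗ[F] F) (x : L ⊗[F] A),
      ρ (contract c (gamma n L x)) = contract c (φ L x)) (z z' : TS F A n) :
    ρ (z * z') = ρ z * ρ z' := by
  obtain ⟨m, c, x, rfl⟩ := exists_contract_gamma_eq n z
  obtain ⟨m', c', x', rfl⟩ := exists_contract_gamma_eq n z'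
  rw [← contract_mul_contract, ← gamma_isPolyLaw, ← gamma_isPolyLaw,
    ← (gamma_isMultiplicativeLaw n _).1, hρ, (hφ' _).1, hφ, hφ, contract_mul_contract, hρ, hρ]

lemma exists_compGamma_gamma_eq (hφ : IsPolyLaw F A B φ) (hφ' : IsMultiplicativeLaw F A B φ)
    (hφ'' : IsHomogeneousLaw F A B n φ) :
    ∃ ρ : TS F A n →ₐ[F] B, compGamma F A n (gamma n) B ρ = φ := by
  obtain ⟨ρ, hρ⟩ := exists_linearMap_contract_gamma hφ hφ''
  refine ⟨AlgHom.ofLinearMap ρ (map_one_of_contract_gamma hφ' hρ)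
    (map_mul_of_contract_gamma hφ hφ' hρ), ?_⟩
  funext L _ _ x
  exact lTensor_law_eq (gamma_isPolyLaw n) hφ hρ x

end Representation

variable (F : Type u) [CommRing F] (A : Type v) [CommRing A] [Algebra F A] (n : ℕ)

/-- **`TS^n_F(A)` represents multiplicative homogeneous polynomial laws of degree `n`.**
For a flat commutative `F`-algebra `A` there is a (unique) polynomial law
`γ_n : A → TS^n_F(A)` whose composition with the inclusion `TS^n_F(A) ⊆ A^{⊗n}` is the
`n`-th tensor power law `x ↦ x^{⊗n}`, and for every commutative `F`-algebra `B` the map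
`ρ ↦ ρ ∘ γ_n` is a bijection from `AlgHom_F(TS^n_F(A), B)` onto the set of multiplicative
polynomial laws `A → B` homogeneous of degree `n`. -/
theorem ts_represents_multiplicative_homogeneous_laws [Module.Flat F A] :
    ∃ γ : ∀ (L : Type u) [CommRing L] [Algebra F L], L ⊗[F] A → L ⊗[F] ↥(TS F A n),
      IsPolyLaw F A (↥(TS F A n)) γ ∧
      (∀ (L : Type u) [CommRing L] [Algebra F L] (x : L ⊗[F] A),
        LinearMap.lTensor L (TS F A n).val.toLinearMap (γ L x) = gammaFull F A n L x) ∧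
      ∀ (B : Type w) [CommRing B] [Algebra F B],
        Function.Injective (compGamma F A n γ B) ∧
        Set.range (compGamma F A n γ B)
          = {φ | IsPolyLaw F A B φ ∧ IsMultiplicativeLaw F A B φ ∧
              IsHomogeneousLaw F A B n φ} := by
  refine ⟨gamma n, gamma_isPolyLaw n, fun L _ _ => lTensor_val_gamma n, fun B _ _ =>
    ⟨compGamma_gamma_injective, Set.Subset.antisymm ?_ ?_⟩⟩
  · rintro _ ⟨ρ, rfl⟩
    exact ⟨compGamma_isPolyLaw ρ (gamma_isPolyLaw n),
      compGamma_isMultiplicativeLaw ρ (gamma_isMultiplicativeLaw n),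
      compGamma_isHomogeneousLaw ρ (gamma_isHomogeneousLaw n)⟩
  · rintro φ ⟨poly, multiplicative, homogeneous⟩
    exact exists_compGamma_gamma_eq poly multiplicative homogeneous

end SymmetricProduct
end
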